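/- Suppose σ > 4/N, and σ < ∞ if N ≤ 4, σ < 4/(N-4) if N ≥ 5. Assume 0 < m < μ₀, where μ₀ = B(N,σ)^{-1/σ}·[(Nσ/(4(σ+1)))·(Nσ/2 - 1)]^{-1/σ}·((Nσ-2)/(Nσ-4))^{2/σ - N/2}, and assume Ẽ_min(m) < -m. Then Ẽ_min(m) is achieved. Moreover, for any sequence (u_n) ⊂ O satisfying ‖u_n‖_{L²}² → m and E(u_n) → Ẽ_min(m), there exist a subsequence (u_{n_k}), a sequence of points (x_k) ⊂ ℝ^N, and u ∈ O such that u_{n_k}(·+x_k) → u strongly in H²(ℝ^N) (so ‖u‖_{L²}² = m and E(u) = Ẽ_min(m)). -/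

import Mathlib

open MeasureTheory Filter Topology

noncomputable section

abbrev Esp (N : ℕ) := EuclideanSpace ℝ (Fin N)

/-- Smooth compactly supported test functions. -/
def TestFun {N : ℕ} (φ : Esp N → ℂ) : Prop :=
  ContDiff ℝ (⊤ : ℕ∞) φ ∧ HasCompactSupport φ

/-- Partial derivative in the `i`-th coordinate direction. -/
def pderivC {N : ℕ} (i : Fin N) (φ : Esp N → ℂ) : Esp N → ℂ :=
  fun x => fderiv ℝ φ x (EuclideanSpace.single i (1 : ℝ))

/-- The Laplacian of a (smooth) function. -/
def lapC {N : ℕ} (φ : Esp N → ℂ) : Esp N → ℂ :=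
  fun x => ∑ i, pderivC i (pderivC i φ) x

/-- `v` is the weak `i`-th partial derivative of `u`. -/
def IsWeakPDeriv {N : ℕ} (u : Esp N → ℂ) (i : Fin N) (v : Esp N → ℂ) : Prop :=
  ∀ φ : Esp N → ℂ, TestFun φ → ∫ x, u x * pderivC i φ x = - ∫ x, v x * φ x

/-- `v` is the weak Laplacian of `u`. -/
def IsWeakLap {N : ℕ} (u v : Esp N → ℂ) : Prop :=
  ∀ φ : Esp N → ℂ, TestFun φ → ∫ x, u x * lapC φ x = ∫ x, v x * φ x

/-- An element of the Sobolev space `H²(ℝ^N, ℂ)`: an `L²` function together with its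
weak partial derivatives and its weak Laplacian, all in `L²`. -/
structure H2 (N : ℕ) where
  u : Esp N → ℂ
  grad : Fin N → Esp N → ℂ
  lapl : Esp N → ℂ
  u_mem : MemLp u 2 (volume : Measure (Esp N))
  grad_mem : ∀ i, MemLp (grad i) 2 (volume : Measure (Esp N))
  lapl_mem : MemLp lapl 2 (volume : Measure (Esp N))
  grad_spec : ∀ i, IsWeakPDeriv u i (grad i)
  lapl_spec : IsWeakLap u lapl

namespace H2

variable {N : ℕ}

/-- `∫ |u|²`. -/
def massSq (U : H2 N) : ℝ := ∫ x, ‖U.u x‖ ^ 2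

/-- `∫ |∇u|²`. -/
def gradSq (U : H2 N) : ℝ := ∑ i, ∫ x, ‖U.grad i x‖ ^ 2

/-- `∫ |Δu|²`. -/
def lapSq (U : H2 N) : ℝ := ∫ x, ‖U.lapl x‖ ^ 2

/-- `∫ |u|^{2σ+2}`. -/
def pPow (σ : ℝ) (U : H2 N) : ℝ := ∫ x, ‖U.u x‖ ^ (2 * σ + 2)

/-- The energy `E(u) = ∫|Δu|² - 2∫|∇u|² - (1/(σ+1))∫|u|^{2σ+2}`. -/
def energy (σ : ℝ) (U : H2 N) : ℝ :=
  U.lapSq - 2 * U.gradSq - (1 / (σ + 1)) * U.pPow σ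

/-- The square of the `H²` norm. -/
def h2NormSq (U : H2 N) : ℝ := U.massSq + U.gradSq + U.lapSq

/-- `u` does not vanish almost everywhere. -/
def Nontriv (U : H2 N) : Prop := ¬ (U.u =ᵐ[(volume : Measure (Esp N))] 0)

end H2

/-- `E_min(m) = inf {E(u) : u ∈ H², ∫|u|² = m}`, with values in `EReal`. -/
def EminE (N : ℕ) (σ m : ℝ) : EReal :=
  ⨅ (U : H2 N) (_ : U.massSq = m), ((U.energy σ : ℝ) : EReal)

/-- The `L^p` norm (as a real number) of a function on `ℝ^N`. -/
def rLp {N : ℕ} (p : ℝ) (f : Esp N → ℂ) : ℝ :=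
  (eLpNorm f (ENNReal.ofReal p) (volume : Measure (Esp N))).toReal


/-- The best constant `B(N,σ)` in the Gagliardo–Nirenberg–Sobolev inequality
`‖u‖_{L^{2σ+2}}^{2σ+2} ≤ B ‖Δu‖_{L²}^{Nσ/2} ‖u‖_{L²}^{2+2σ-Nσ/2}`. -/
def GNconst (N : ℕ) (σ : ℝ) : ℝ :=
  sSup {r : ℝ | ∃ U : H2 N, U.Nontriv ∧
    r = U.pPow σ /
      (rLp 2 U.lapl ^ ((N : ℝ) * σ / 2) * rLp 2 U.u ^ (2 + 2 * σ - (N : ℝ) * σ / 2))}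

/-- `k* = (σ+1)^{1/σ} B(N,σ)^{-1/σ}`. -/
def kstar (N : ℕ) (σ : ℝ) : ℝ := (σ + 1) ^ (1 / σ) * GNconst N σ ^ (-(1 / σ))

/-- Strong `H²` convergence of `v k (· + xs k)` to `U`. -/
def H2TendstoTrans {N : ℕ} (v : ℕ → H2 N) (xs : ℕ → Esp N) (U : H2 N) : Prop :=
  Tendsto (fun k => eLpNorm (fun x => (v k).u (x + xs k) - U.u x) 2
      (volume : Measure (Esp N))) atTop (nhds 0) ∧
  (∀ i, Tendsto (fun k => eLpNorm (fun x => (v k).grad i (x + xs k) - U.grad i x) 2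
      (volume : Measure (Esp N))) atTop (nhds 0)) ∧
  Tendsto (fun k => eLpNorm (fun x => (v k).lapl (x + xs k) - U.lapl x) 2
      (volume : Measure (Esp N))) atTop (nhds 0)

/-- `u` is a weak (`H^{-2}`) solution of `Δ²u + 2Δu + (1+c)u - |u|^{2σ}u = 0`. -/
def SolvesSW {N : ℕ} (σ c : ℝ) (U : H2 N) : Prop :=
  ∀ φ : Esp N → ℂ, TestFun φ →
    (∫ x, U.lapl x * lapC φ x) + 2 * (∫ x, U.lapl x * φ x) +
        ((1 + c : ℝ) : ℂ) * (∫ x, U.u x * φ x) -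
        (∫ x, ((‖U.u x‖ ^ (2 * σ) : ℝ) : ℂ) * U.u x * φ x) = 0

/-- `T_c(u) = ∫|Δu|² - 2∫|∇u|² + (1+c)∫|u|²`. -/
def Tfun {N : ℕ} (c : ℝ) (U : H2 N) : ℝ := U.lapSq - 2 * U.gradSq + (1 + c) * U.massSq

/-- `t(c) = inf {T_c(u) : ∫|u|^{2σ+2} = 1}`. -/
def tmin (N : ℕ) (σ c : ℝ) : ℝ := sInf {r : ℝ | ∃ U : H2 N, U.pPow σ = 1 ∧ r = Tfun c U}

/-- The action `S_c(u) = E(u) + (1+c)‖u‖_{L²}² = T_c(u) - (1/(σ+1))∫|u|^{2σ+2}`. -/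
def action {N : ℕ} (σ c : ℝ) (U : H2 N) : ℝ := U.energy σ + (1 + c) * U.massSq

/-- `D(u) = ∫|Δu|² - (Nσ/(4(σ+1)))(Nσ/2 - 1) ∫|u|^{2σ+2}`. -/
def Dfun {N : ℕ} (σ : ℝ) (U : H2 N) : ℝ :=
  U.lapSq - (N : ℝ) * σ / (4 * (σ + 1)) * ((N : ℝ) * σ / 2 - 1) * U.pPow σ

/-- `φ_u(t) = E(u_t)` where `u_t(x) = t^{N/4} u(t^{1/2} x)`, i.e.
`φ_u(t) = t² ∫|Δu|² - 2t ∫|∇u|² - (t^{Nσ/2}/(σ+1)) ∫|u|^{2σ+2}`. -/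
def phiFun {N : ℕ} (σ : ℝ) (U : H2 N) (t : ℝ) : ℝ :=
  t ^ 2 * U.lapSq - 2 * t * U.gradSq - t ^ ((N : ℝ) * σ / 2) / (σ + 1) * U.pPow σ

/-- The inflection point `t_{u,infl}`, the unique zero of `φ''_u`. -/
def tInfl {N : ℕ} (σ : ℝ) (U : H2 N) : ℝ :=
  (8 * (σ + 1) * U.lapSq / ((N : ℝ) * σ * ((N : ℝ) * σ - 2) * U.pPow σ)) ^
    (2 / ((N : ℝ) * σ - 4))

/-- The open set `O = {u ≠ 0 : D(u) > 0 and φ'_u(t_{u,infl}) > 0}`. -/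
def memO {N : ℕ} (σ : ℝ) (U : H2 N) : Prop :=
  U.Nontriv ∧ 0 < Dfun σ U ∧ 0 < deriv (phiFun σ U) (tInfl σ U)

/-- `Ẽ_min(m) = inf {E(u) : u ∈ O, ‖u‖_{L²}² = m}`. -/
def tildeE (N : ℕ) (σ m : ℝ) : ℝ :=
  sInf {r : ℝ | ∃ U : H2 N, memO σ U ∧ U.massSq = m ∧ r = U.energy σ}

/-- The mass threshold `μ₀`. -/
def mu0 (N : ℕ) (σ : ℝ) : ℝ :=
  GNconst N σ ^ (-(1 / σ)) *
    ((N : ℝ) * σ / (4 * (σ + 1)) * ((N : ℝ) * σ / 2 - 1)) ^ (-(1 / σ)) *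
    (((N : ℝ) * σ - 2) / ((N : ℝ) * σ - 4)) ^ (2 / σ - (N : ℝ) / 2)

/-!
Write `L = ∫|Δu|²`, `M = ∫|u|²` and `ρ = (Nσ-2)/(Nσ-4)`. By the Gagliardo–Nirenberg inequality,
every `u ≠ 0` with `M ≤ m < μ₀` and `L ≤ ρ² m` belongs to `O`. Conversely, a
function of `O` with `√L > ρ √M` loses a definite amount of energy when it is dilated down to
`√L = ρ √M`, so minimizing sequences satisfy `limsup L ≤ ρ² m`.

Vanishing of a minimizing sequence is excluded by `Ẽ_min(m) < -m`, since
`E(u) + M ≥ -(σ+1)⁻¹ ∫|u|^{2σ+2}`. After translation, a subsequence therefore has a weak limit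
`U ≠ 0`, and all the terms of the energy split asymptotically between `U` and the remainder. Both
pieces still satisfy `M ≤ m` and `L ≤ ρ² m`, hence lie in `O`. There, multiplying a function by a
constant to raise its mass to `m` lowers the energy per unit mass, strictly if `M < m`. So mass
cannot split; the remainder tends to zero in `L²`, then in the interpolation norms, and finally in
`H²` because its energy tends to zero.
-/

open scoped SchwartzMap FourierTransform LineDeriv

section PowerInequalities

theorem add_rpow_le_weighted {p θ a b : ℝ} (hp : 1 ≤ p) (hθ₀ : 0 < θ) (hθ₁ : θ < 1) (ha : 0 ≤ a)
    (hb : 0 ≤ b) : (a + b) ^ p ≤ θ ^ (1 - p) * a ^ p + (1 - θ) ^ (1 - p) * b ^ p := by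
  have hθ : 0 < 1 - θ := sub_pos.2 hθ₁
  have h := (convexOn_rpow hp).2 (x := a / θ) (div_nonneg ha hθ₀.le) (y := b / (1 - θ))
    (div_nonneg hb hθ.le) hθ₀.le hθ.le (by ring)
  simp only [smul_eq_mul] at h
  rw [mul_div_cancel₀ _ hθ₀.ne', mul_div_cancel₀ _ hθ.ne', Real.div_rpow ha hθ₀.le,
    Real.div_rpow hb hθ.le] at h
  refine h.trans_eq ?_
  rw [Real.rpow_sub hθ₀, Real.rpow_sub hθ, Real.rpow_one, Real.rpow_one]
  ring

theorem exists_add_rpow_le {p ε : ℝ} (hp : 1 ≤ p) (hε : 0 < ε) :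
    ∃ C, 0 ≤ C ∧ ∀ a b : ℝ, 0 ≤ a → 0 ≤ b → (a + b) ^ p ≤ C * a ^ p + (1 + ε) * b ^ p := by
  have hlim : Tendsto (fun θ : ℝ => (1 - θ) ^ (1 - p)) (𝓝[>] 0) (𝓝 1) := by
    have hcont : ContinuousAt (fun θ : ℝ => (1 - θ) ^ (1 - p)) 0 :=
      ContinuousAt.rpow_const (by fun_prop) (Or.inl (by norm_num))
    simpa using hcont.tendsto.mono_left nhdsWithin_le_nhds
  obtain ⟨θ, hθ, hθ₀, hθ₁⟩ := ((hlim.eventually (eventually_lt_nhds (lt_add_of_pos_right 1 hε))).and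
    (Ioo_mem_nhdsGT (zero_lt_one' ℝ))).exists
  refine ⟨θ ^ (1 - p), by positivity, fun a b ha hb =>
    (add_rpow_le_weighted hp hθ₀ hθ₁ ha hb).trans ?_⟩
  gcongr

theorem exists_abs_norm_add_rpow_sub_le (E : Type*) [SeminormedAddCommGroup E] {p ε : ℝ}
    (hp : 1 ≤ p) (hε : 0 < ε) :
    ∃ C, 0 ≤ C ∧ ∀ x y : E, |‖x + y‖ ^ p - ‖y‖ ^ p| ≤ C * ‖x‖ ^ p + ε * ‖y‖ ^ p := by
  obtain ⟨δ, hδ, hδ₁, hδε⟩ : ∃ δ : ℝ, 0 < δ ∧ δ ≤ 1 ∧ 2 * δ ≤ ε :=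
    ⟨min 1 (ε / 2), by positivity, min_le_left _ _, by linarith [min_le_right 1 (ε / 2)]⟩
  obtain ⟨C, hC, hadd⟩ := exists_add_rpow_le hp hδ
  refine ⟨2 * C, by positivity, fun x y => ?_⟩
  have hup : ‖x + y‖ ^ p ≤ C * ‖x‖ ^ p + (1 + δ) * ‖y‖ ^ p :=
    (Real.rpow_le_rpow (norm_nonneg _) (norm_add_le x y) (by linarith)).trans
      (hadd _ _ (norm_nonneg _) (norm_nonneg _))
  have hlow : ‖y‖ ^ p ≤ C * ‖x‖ ^ p + (1 + δ) * ‖x + y‖ ^ p := by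
    refine (Real.rpow_le_rpow (norm_nonneg _) ?_ (by linarith)).trans
      (hadd _ _ (norm_nonneg _) (norm_nonneg _))
    simpa [add_comm] using norm_sub_le (x + y) x
  have hδup : δ * ‖x + y‖ ^ p ≤ C * ‖x‖ ^ p + 2 * δ * ‖y‖ ^ p :=
    calc δ * ‖x + y‖ ^ p ≤ δ * (C * ‖x‖ ^ p + (1 + δ) * ‖y‖ ^ p) := by gcongr
      _ = δ * (C * ‖x‖ ^ p) + (1 + δ) * δ * ‖y‖ ^ p := by ring
      _ ≤ 1 * (C * ‖x‖ ^ p) + (1 + 1) * δ * ‖y‖ ^ p := by gcongr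
      _ = C * ‖x‖ ^ p + 2 * δ * ‖y‖ ^ p := by ring
  have hyε : 2 * δ * ‖y‖ ^ p ≤ ε * ‖y‖ ^ p := by gcongr
  have hδy : 0 ≤ δ * ‖y‖ ^ p := by positivity
  have hCx : 0 ≤ C * ‖x‖ ^ p := by positivity
  exact abs_le.2 ⟨by linarith only [hlow, hδup, hyε, hCx], by linarith only [hup, hyε, hδy, hCx]⟩

end PowerInequalities

section BrezisLieb

variable {α E : Type*} {mα : MeasurableSpace α} {μ : Measure α} [NormedAddCommGroup E]

theorem integrable_norm_rpow_of_memLp {p : ℝ} (hp : 0 < p) {f : α → E}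
    (hf : MemLp f (ENNReal.ofReal p) μ) : Integrable (fun x => ‖f x‖ ^ p) μ := by
  simpa [ENNReal.toReal_ofReal hp.le] using
    hf.integrable_norm_rpow (ENNReal.ofReal_pos.2 hp).ne' ENNReal.ofReal_ne_top

theorem tendsto_integral_brezisLieb_excess {p ε : ℝ} (hp : 1 ≤ p) (hε : 0 < ε) {f : α → E}
    {v : ℕ → α → E} (hf : MemLp f (ENNReal.ofReal p) μ)
    (hv : ∀ n, MemLp (v n) (ENNReal.ofReal p) μ)
    (hlim : ∀ᵐ x ∂μ, Tendsto (fun n => v n x) atTop (𝓝 0)) :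
    Tendsto (fun n => ∫ x, max 0
      (|‖f x + v n x‖ ^ p - ‖v n x‖ ^ p - ‖f x‖ ^ p| - ε * ‖v n x‖ ^ p) ∂μ) atTop (𝓝 0) := by
  have hp₀ : 0 < p := by linarith
  obtain ⟨C, hC, hadd⟩ := exists_abs_norm_add_rpow_sub_le E hp hε
  have hfi := integrable_norm_rpow_of_memLp hp₀ hf
  nth_rewrite 2 [← integral_zero α ℝ (μ := μ)]
  refine tendsto_integral_of_dominated_convergence (fun x => (C + 1) * ‖f x‖ ^ p) (fun n => ?_)
    (hfi.const_mul _) (fun n => ae_of_all _ fun x => ?_) ?_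
  · have hvi := integrable_norm_rpow_of_memLp hp₀ (hv n)
    have hfvi := integrable_norm_rpow_of_memLp hp₀ (hf.add (hv n))
    exact ((integrable_zero _ _ _).sup
      (((hfvi.sub hvi).sub hfi).abs.sub (hvi.const_mul ε))).aestronglyMeasurable
  · have hfx : 0 ≤ ‖f x‖ ^ p := by positivity
    rw [Real.norm_of_nonneg (le_max_left _ _)]
    refine max_le (by positivity) ?_
    have htri := abs_sub (‖f x + v n x‖ ^ p - ‖v n x‖ ^ p) (‖f x‖ ^ p)
    rw [abs_of_nonneg hfx] at htri
    linarith [hadd (f x) (v n x)]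
  · filter_upwards [hlim] with x hx
    have hvx : Tendsto (fun n => ‖v n x‖ ^ p) atTop (𝓝 0) := by
      simpa [Real.zero_rpow hp₀.ne'] using hx.norm.rpow_const (p := p) (Or.inr hp₀.le)
    have hfvx : Tendsto (fun n => ‖f x + v n x‖ ^ p) atTop (𝓝 (‖f x‖ ^ p)) := by
      simpa using (hx.const_add (f x)).norm.rpow_const (p := p) (Or.inr hp₀.le)
    simpa using (tendsto_const_nhds (x := (0 : ℝ))).max
      (((hfvx.sub hvx).sub_const (‖f x‖ ^ p)).abs.sub (hvx.const_mul ε))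

theorem abs_integral_add_integral_sub_le {p : ℝ} (hp : 0 < p) {f g : α → E}
    (hf : MemLp f (ENNReal.ofReal p) μ) (hg : MemLp g (ENNReal.ofReal p) μ) :
    |(∫ x, ‖g x‖ ^ p ∂μ) + (∫ x, ‖f x‖ ^ p ∂μ) - ∫ x, ‖f x + g x‖ ^ p ∂μ| ≤
      ∫ x, |‖f x + g x‖ ^ p - ‖g x‖ ^ p - ‖f x‖ ^ p| ∂μ := by
  have hfi := integrable_norm_rpow_of_memLp hp hf
  have hgi := integrable_norm_rpow_of_memLp hp hg
  have hfgi : Integrable (fun x => ‖f x + g x‖ ^ p) μ :=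
    integrable_norm_rpow_of_memLp hp (hf.add hg)
  have hfgi' : Integrable (fun x => ‖f x + g x‖ ^ p - ‖g x‖ ^ p) μ := hfgi.sub hgi
  rw [abs_sub_comm, ← sub_sub, ← integral_sub hfgi hgi, ← integral_sub hfgi' hfi]
  exact abs_integral_le_integral_abs

theorem tendsto_brezisLieb {p K : ℝ} (hp : 1 ≤ p) {f : α → E} {v : ℕ → α → E}
    (hf : MemLp f (ENNReal.ofReal p) μ) (hv : ∀ n, MemLp (v n) (ENNReal.ofReal p) μ)
    (hK : ∀ n, ∫ x, ‖v n x‖ ^ p ∂μ ≤ K)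
    (hlim : ∀ᵐ x ∂μ, Tendsto (fun n => v n x) atTop (𝓝 0)) :
    Tendsto (fun n => (∫ x, ‖v n x‖ ^ p ∂μ) + (∫ x, ‖f x‖ ^ p ∂μ) - ∫ x, ‖f x + v n x‖ ^ p ∂μ)
      atTop (𝓝 0) := by
  have hp₀ : 0 < p := by linarith
  have hK₀ : 0 ≤ K := (integral_nonneg fun x => by positivity).trans (hK 0)
  have hvi (n) := integrable_norm_rpow_of_memLp hp₀ (hv n)
  have hdi (n) : Integrable (fun x => ‖f x + v n x‖ ^ p - ‖v n x‖ ^ p - ‖f x‖ ^ p) μ :=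
    ((integrable_norm_rpow_of_memLp hp₀ (hf.add (hv n))).sub (hvi n)).sub
      (integrable_norm_rpow_of_memLp hp₀ hf)
  rw [Metric.tendsto_atTop]
  intro ε hε
  set η := ε / (2 * (K + 1)) with hη
  have hη₀ : 0 < η := by positivity
  have hηK : η * K ≤ ε / 2 := by
    calc η * K ≤ η * (K + 1) := by gcongr; linarith
      _ = ε / 2 := by rw [hη]; field_simp
  obtain ⟨n₀, hn₀⟩ := eventually_atTop.1
    ((tendsto_integral_brezisLieb_excess hp hη₀ hf hv hlim).eventually
      (eventually_lt_nhds (half_pos hε)))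
  refine ⟨n₀, fun n hn => ?_⟩
  have hexi := (integrable_zero _ _ _).sup ((hdi n).abs.sub ((hvi n).const_mul η))
  have hexcess : ∫ x, |‖f x + v n x‖ ^ p - ‖v n x‖ ^ p - ‖f x‖ ^ p| ∂μ < ε := by
    have hmono : ∫ x, |‖f x + v n x‖ ^ p - ‖v n x‖ ^ p - ‖f x‖ ^ p| - η * ‖v n x‖ ^ p ∂μ ≤ _ :=
      integral_mono ((hdi n).abs.sub ((hvi n).const_mul η)) hexi fun x => le_max_right _ _
    rw [integral_sub (hdi n).abs ((hvi n).const_mul η), integral_const_mul] at hmono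
    have hvK := mul_le_mul_of_nonneg_left (hK n) hη₀.le
    simp only [Pi.sup_apply, Pi.sub_apply] at hmono
    linarith [hmono.trans_lt (hn₀ n hn)]
  rw [Real.dist_eq, sub_zero]
  exact (abs_integral_add_integral_sub_le hp₀ hf (hv n)).trans_lt hexcess

end BrezisLieb

section SquareIntegrable

variable {α E : Type*} {mα : MeasurableSpace α} {μ : Measure α} [NormedAddCommGroup E]

theorem integral_sq_norm_nonneg (μ : Measure α) (f : α → E) : 0 ≤ ∫ x, ‖f x‖ ^ 2 ∂μ :=
  integral_nonneg fun _ => by positivity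

theorem eLpNorm_two_eq_ofReal_sqrt {f : α → E} (hf : MemLp f 2 μ) :
    eLpNorm f 2 μ = ENNReal.ofReal √(∫ x, ‖f x‖ ^ 2 ∂μ) := by
  simp [hf.eLpNorm_eq_integral_rpow_norm two_ne_zero ENNReal.ofNat_ne_top, Real.sqrt_eq_rpow]

theorem tendsto_eLpNorm_two_zero {f : ℕ → α → E} (hf : ∀ n, MemLp (f n) 2 μ)
    (h : Tendsto (fun n => ∫ x, ‖f n x‖ ^ 2 ∂μ) atTop (𝓝 0)) :
    Tendsto (fun n => eLpNorm (f n) 2 μ) atTop (𝓝 0) := by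
  simpa [eLpNorm_two_eq_ofReal_sqrt (hf _)] using ENNReal.tendsto_ofReal h.sqrt

theorem sq_integral_norm_mul_norm_le {F : Type*} [NormedAddCommGroup F] {f : α → E} {g : α → F}
    (hf : MemLp f 2 μ) (hg : MemLp g 2 μ) :
    (∫ x, ‖f x‖ * ‖g x‖ ∂μ) ^ 2 ≤ (∫ x, ‖f x‖ ^ 2 ∂μ) * ∫ x, ‖g x‖ ^ 2 ∂μ := by
  have h := integral_mul_le_Lp_mul_Lq_of_nonneg Real.HolderConjugate.two_two
    (ae_of_all μ fun x => norm_nonneg (f x)) (ae_of_all μ fun x => norm_nonneg (g x))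
    (by simpa using hf.norm) (by simpa using hg.norm)
  simp only [Real.rpow_two, ← Real.sqrt_eq_rpow] at h
  rw [← Real.sqrt_mul (integral_sq_norm_nonneg μ f)] at h
  exact (Real.le_sqrt (integral_nonneg fun x => by positivity)
    (mul_nonneg (integral_sq_norm_nonneg μ f) (integral_sq_norm_nonneg μ g))).1 h

theorem integral_sub_mul_of_memLp {𝕜 : Type*} [RCLike 𝕜] {f g h : α → 𝕜} (hf : MemLp f 2 μ)
    (hg : MemLp g 2 μ) (hh : MemLp h 2 μ) :
    ∫ x, (f x - g x) * h x ∂μ = (∫ x, f x * h x ∂μ) - ∫ x, g x * h x ∂μ := by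
  simp only [sub_mul]
  exact integral_sub (hf.integrable_mul hh) (hg.integrable_mul hh)

end SquareIntegrable

section WeakConvergence

variable {α 𝕜 : Type*} {mα : MeasurableSpace α} {μ : Measure α} [RCLike 𝕜]

/-- Weak convergence in `L²(μ)` of the functions `f n` to `g`, tested with the bilinear pairing
`∫ h * f` (no conjugation). -/
def WeakL2Tendsto (μ : Measure α) (f : ℕ → α → 𝕜) (g : α → 𝕜) : Prop :=
  ∀ h : α → 𝕜, MemLp h 2 μ → Tendsto (fun n => ∫ x, h x * f n x ∂μ) atTop (𝓝 (∫ x, h x * g x ∂μ))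

namespace WeakL2Tendsto

variable {f : ℕ → α → 𝕜} {g : α → 𝕜}

theorem comp_strictMono (hw : WeakL2Tendsto μ f g) {ψ : ℕ → ℕ} (hψ : StrictMono ψ) :
    WeakL2Tendsto μ (fun n => f (ψ n)) g := fun h hh => (hw h hh).comp hψ.tendsto_atTop

theorem sub_limit (hw : WeakL2Tendsto μ f g) (hf : ∀ n, MemLp (f n) 2 μ) (hg : MemLp g 2 μ) :
    WeakL2Tendsto μ (fun n x => f n x - g x) 0 := by
  intro h hh
  have hlim := (hw h hh).sub_const (∫ x, h x * g x ∂μ)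
  simp only [mul_comm (h _)] at hlim ⊢
  simpa [integral_sub_mul_of_memLp (hf _) hg hh] using hlim

theorem tendsto_sq_norm_split (hw : WeakL2Tendsto μ f g) (hf : ∀ n, MemLp (f n) 2 μ)
    (hg : MemLp g 2 μ) :
    Tendsto (fun n => (∫ x, ‖f n x - g x‖ ^ 2 ∂μ) + (∫ x, ‖g x‖ ^ 2 ∂μ) - ∫ x, ‖f n x‖ ^ 2 ∂μ)
      atTop (𝓝 0) := by
  have hg' : MemLp (fun x => starRingEnd 𝕜 (g x)) 2 μ := hg.star
  have hre : Tendsto (fun n => RCLike.re (∫ x, starRingEnd 𝕜 (g x) * f n x ∂μ)) atTop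
      (𝓝 (RCLike.re (∫ x, starRingEnd 𝕜 (g x) * g x ∂μ))) :=
    (RCLike.continuous_re.tendsto _).comp (hw _ hg')
  have hlim := (hre.const_sub (RCLike.re (∫ x, starRingEnd 𝕜 (g x) * g x ∂μ))).const_mul 2
  rw [sub_self, mul_zero] at hlim
  refine hlim.congr fun n => ?_
  have hgg : Integrable (fun x => starRingEnd 𝕜 (g x) * g x) μ := hg'.integrable_mul hg
  have hgf : Integrable (fun x => starRingEnd 𝕜 (g x) * f n x) μ := hg'.integrable_mul (hf n)
  have hfg : Integrable (fun x => ‖f n x - g x‖ ^ 2) μ := ((hf n).sub hg).norm.integrable_sq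
  have hg2 := hg.norm.integrable_sq
  have hsum : Integrable (fun x => ‖f n x - g x‖ ^ 2 + ‖g x‖ ^ 2) μ := hfg.add hg2
  rw [← integral_re hgg, ← integral_re hgf, ← integral_sub hgg.re hgf.re, ← integral_const_mul,
    ← integral_add hfg hg2, ← integral_sub hsum (hf n).norm.integrable_sq]
  refine integral_congr_ae (ae_of_all _ fun x => ?_)
  simp only [RCLike.norm_sq_eq_def, RCLike.mul_re, RCLike.conj_re, RCLike.conj_im, map_sub]
  ring

end WeakL2Tendsto

theorem inner_toLp_eq_conj_integral {f h : α → 𝕜} (hf : MemLp f 2 μ)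
    (hh : MemLp (fun x => starRingEnd 𝕜 (h x)) 2 μ) :
    inner 𝕜 (hf.toLp f) (hh.toLp _) = starRingEnd 𝕜 (∫ x, h x * f x ∂μ) := by
  rw [L2.inner_def, ← integral_conj]
  refine integral_congr_ae ?_
  filter_upwards [hf.coeFn_toLp, hh.coeFn_toLp] with x hfx hhx
  simp [hfx, hhx, mul_comm]

theorem exists_subseq_weakL2Tendsto [IsSeparable μ] {f : ℕ → α → 𝕜} (hf : ∀ n, MemLp (f n) 2 μ)
    {C : ℝ} (hC : ∀ n, ∫ x, ‖f n x‖ ^ 2 ∂μ ≤ C) :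
    ∃ ψ : ℕ → ℕ, StrictMono ψ ∧ ∃ g, MemLp g 2 μ ∧ WeakL2Tendsto μ (fun n => f (ψ n)) g := by
  have : Fact ((2 : ENNReal) ≠ ⊤) := ⟨ENNReal.ofNat_ne_top⟩
  let T : ℕ → WeakDual 𝕜 (Lp 𝕜 2 μ) := fun n =>
    StrongDual.toWeakDual (InnerProductSpace.toDual 𝕜 _ ((hf n).toLp (f n)))
  have hT : ∀ n, T n ∈ WeakDual.toStrongDual ⁻¹' Metric.closedBall 0 √C := by
    intro n
    suffices ‖(hf n).toLp (f n)‖ ≤ √C by simpa [T] using this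
    rw [Lp.norm_toLp, eLpNorm_two_eq_ofReal_sqrt (hf n), ENNReal.toReal_ofReal (by positivity)]
    exact Real.sqrt_le_sqrt (hC n)
  obtain ⟨ℓ, -, ψ, hψ, hlim⟩ := WeakDual.isSeqCompact_closedBall 𝕜 (Lp 𝕜 2 μ) 0 √C hT
  set G : Lp 𝕜 2 μ := (InnerProductSpace.toDual 𝕜 _).symm (WeakDual.toStrongDual ℓ) with hG
  refine ⟨ψ, hψ, G, Lp.memLp G, fun h hh => ?_⟩
  have hh' : MemLp (fun x => starRingEnd 𝕜 (h x)) 2 μ := hh.star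
  have hℓ : ℓ (hh'.toLp _) = starRingEnd 𝕜 (∫ x, h x * G x ∂μ) := by
    rw [← inner_toLp_eq_conj_integral (Lp.memLp G) hh', Lp.toLp_coeFn, hG,
      InnerProductSpace.toDual_symm_apply]
    rfl
  have hconj : Tendsto (fun n => starRingEnd 𝕜 (∫ x, h x * f (ψ n) x ∂μ)) atTop
      (𝓝 (starRingEnd 𝕜 (∫ x, h x * G x ∂μ))) := by
    simp only [← hℓ, ← inner_toLp_eq_conj_integral (hf _) hh']
    exact tendsto_iff_forall_eval_tendsto_topDualPairing.1 hlim (hh'.toLp _)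
  simpa [Function.comp_def] using (RCLike.continuous_conj.tendsto _).comp hconj

theorem exists_subseq_forall_weakL2Tendsto [IsSeparable μ] {ι : Type*} [Finite ι]
    {f : ι → ℕ → α → 𝕜} (hf : ∀ i n, MemLp (f i n) 2 μ) {C : ℝ}
    (hC : ∀ i n, ∫ x, ‖f i n x‖ ^ 2 ∂μ ≤ C) :
    ∃ ψ : ℕ → ℕ, StrictMono ψ ∧
      ∀ i, ∃ g, MemLp g 2 μ ∧ WeakL2Tendsto μ (fun n => f i (ψ n)) g := by
  classical
  cases nonempty_fintype ι
  suffices ∀ s : Finset ι, ∃ ψ : ℕ → ℕ, StrictMono ψ ∧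
      ∀ i ∈ s, ∃ g, MemLp g 2 μ ∧ WeakL2Tendsto μ (fun n => f i (ψ n)) g by
    simpa using this Finset.univ
  intro s
  induction s using Finset.induction_on with
  | empty => exact ⟨id, strictMono_id, by simp⟩
  | insert a s _ ih =>
    obtain ⟨ψ, hψ, hs⟩ := ih
    obtain ⟨χ, hχ, ga, hga, hwa⟩ :=
      exists_subseq_weakL2Tendsto (fun n => hf a (ψ n)) (fun n => hC a (ψ n))
    refine ⟨ψ ∘ χ, hψ.comp hχ, fun i hi => ?_⟩
    rcases Finset.mem_insert.1 hi with rfl | hi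
    · exact ⟨ga, hga, hwa⟩
    · obtain ⟨g, hg, hw⟩ := hs i hi
      exact ⟨g, hg, hw.comp_strictMono hχ⟩

end WeakConvergence

section TestFunctions

variable {N : ℕ} {φ : Esp N → ℂ}

theorem TestFun.memLp (hφ : TestFun φ) (p : ENNReal) : MemLp φ p volume :=
  hφ.1.continuous.memLp_of_hasCompactSupport hφ.2

theorem TestFun.pderivC (hφ : TestFun φ) (i : Fin N) : TestFun (_root_.pderivC i φ) :=
  ⟨(hφ.1.fderiv_right (m := ((⊤ : ℕ∞) : WithTop ℕ∞)) (by norm_cast)).clm_apply contDiff_const,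
    hφ.2.fderiv_apply (𝕜 := ℝ) _⟩

theorem TestFun.lapC (hφ : TestFun φ) : TestFun (_root_.lapC φ) := by
  refine ⟨ContDiff.sum fun i _ => ((hφ.pderivC i).pderivC i).1, ?_⟩
  have hsum : _root_.lapC φ = ∑ i, _root_.pderivC i (_root_.pderivC i φ) := by
    ext x; simp [_root_.lapC]
  rw [hsum]
  exact Finset.sum_induction _ (HasCompactSupport ·) (fun _ _ => HasCompactSupport.add)
    HasCompactSupport.zero fun i _ => ((hφ.pderivC i).pderivC i).2

theorem TestFun.comp_smul_add (hφ : TestFun φ) {r : ℝ} (hr : r ≠ 0) (x₀ : Esp N) :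
    TestFun (fun y => φ (r • y + x₀)) :=
  ⟨hφ.1.comp (by fun_prop),
    hφ.2.comp_homeomorph ((Homeomorph.smulOfNeZero r hr).trans (Homeomorph.addRight x₀))⟩

theorem pderivC_comp_smul_add (hφ : Differentiable ℝ φ) (i : Fin N) (r : ℝ) (x₀ x : Esp N) :
    pderivC i (fun y => φ (r • y + x₀)) x = r * pderivC i φ (r • x + x₀) := by
  have haff : HasFDerivAt (fun y : Esp N => r • y + x₀) (r • ContinuousLinearMap.id ℝ (Esp N)) x :=
    ((hasFDerivAt_id x).const_smul r).add_const x₀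
  have hcomp : HasFDerivAt (fun y => φ (r • y + x₀)) _ x := (hφ _).hasFDerivAt.comp x haff
  unfold pderivC
  rw [hcomp.fderiv]
  simp

theorem lapC_comp_smul_add (hφ : TestFun φ) (r : ℝ) (x₀ x : Esp N) :
    lapC (fun y => φ (r • y + x₀)) x = r ^ 2 * lapC φ (r • x + x₀) := by
  unfold lapC
  rw [Finset.mul_sum]
  refine Finset.sum_congr rfl fun i _ => ?_
  have hdiff : Differentiable ℝ φ := hφ.1.differentiable (by norm_num)
  have hdiff' : Differentiable ℝ (pderivC i φ) := (hφ.pderivC i).1.differentiable (by norm_num)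
  have hfirst : pderivC i (fun y => φ (r • y + x₀)) = r • fun y => pderivC i φ (r • y + x₀) := by
    ext y
    simpa using pderivC_comp_smul_add hdiff i r x₀ y
  have hsmul : pderivC i (r • fun y => pderivC i φ (r • y + x₀)) x =
      r * pderivC i (fun y => pderivC i φ (r • y + x₀)) x := by
    unfold pderivC at hdiff' ⊢
    rw [fderiv_const_smul (by fun_prop)]
    simp
  rw [hfirst, hsmul, pderivC_comp_smul_add hdiff']
  ring

end TestFunctions

section AffineChangeOfVariables

variable {N : ℕ} {r : ℝ}

theorem integral_comp_smul_add {F : Type*} [NormedAddCommGroup F] [NormedSpace ℝ F] (f : Esp N → F)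
    (hr : 0 < r) (x₀ : Esp N) : ∫ x, f (r • x + x₀) = (r ^ N)⁻¹ • ∫ x, f x := by
  rw [Measure.integral_comp_smul volume (fun x => f (x + x₀)) r, integral_add_right_eq_self,
    abs_of_pos (by positivity), finrank_euclideanSpace_fin]

theorem integral_comp_smul_add_mul (f g : Esp N → ℂ) (hr : 0 < r) (x₀ : Esp N) :
    ∫ x, f (r • x + x₀) * g x = (r ^ N)⁻¹ • ∫ y, f y * g (r⁻¹ • y + -(r⁻¹ • x₀)) := by
  rw [← integral_comp_smul_add _ hr x₀]
  simp [smul_add, smul_smul, inv_mul_cancel₀ hr.ne']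

theorem integral_sq_norm_const_mul_comp_smul_add (f : Esp N → ℂ) (c : ℝ) (hr : 0 < r)
    (x₀ : Esp N) :
    ∫ x, ‖(c : ℂ) * f (r • x + x₀)‖ ^ 2 = c ^ 2 * (r ^ N)⁻¹ * ∫ x, ‖f x‖ ^ 2 := by
  rw [mul_assoc, ← smul_eq_mul (r ^ N)⁻¹, ← integral_comp_smul_add (fun x => ‖f x‖ ^ 2) hr x₀,
    ← integral_const_mul]
  simp [mul_pow]

theorem memLp_two_comp_smul_add {f : Esp N → ℂ} (hf : MemLp f 2 volume) (hr : 0 < r)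
    (x₀ : Esp N) : MemLp (fun x => f (r • x + x₀)) 2 volume := by
  have hsmul : Measure.QuasiMeasurePreserving (fun x : Esp N => r • x) volume volume := by
    refine ⟨measurable_const_smul r, ?_⟩
    rw [Measure.map_addHaar_smul _ hr.ne']
    exact Measure.smul_absolutelyContinuous
  have hmeas := hf.1.comp_quasiMeasurePreserving
    ((quasiMeasurePreserving_add_right volume x₀).comp hsmul)
  exact (memLp_two_iff_integrable_sq_norm hmeas).2
    ((hf.norm.integrable_sq.comp_add_right x₀).comp_smul hr.ne')

end AffineChangeOfVariables

section WeakDerivatives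

variable {N : ℕ} {u u' v v' : Esp N → ℂ} {i : Fin N}

theorem IsWeakPDeriv.const_mul (h : IsWeakPDeriv u i v) (c : ℂ) :
    IsWeakPDeriv (fun x => c * u x) i (fun x => c * v x) := by
  intro φ hφ
  simp only [mul_assoc, integral_const_mul, h φ hφ, mul_neg]

theorem IsWeakLap.const_mul (h : IsWeakLap u v) (c : ℂ) :
    IsWeakLap (fun x => c * u x) (fun x => c * v x) := by
  intro φ hφ
  simp only [mul_assoc, integral_const_mul, h φ hφ]

theorem IsWeakPDeriv.sub (h : IsWeakPDeriv u i v) (h' : IsWeakPDeriv u' i v')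
    (hu : MemLp u 2 volume) (hu' : MemLp u' 2 volume) (hv : MemLp v 2 volume)
    (hv' : MemLp v' 2 volume) :
    IsWeakPDeriv (fun x => u x - u' x) i (fun x => v x - v' x) := by
  intro φ hφ
  rw [integral_sub_mul_of_memLp hu hu' ((hφ.pderivC i).memLp 2),
    integral_sub_mul_of_memLp hv hv' (hφ.memLp 2), h φ hφ, h' φ hφ]
  ring

theorem IsWeakLap.sub (h : IsWeakLap u v) (h' : IsWeakLap u' v') (hu : MemLp u 2 volume)
    (hu' : MemLp u' 2 volume) (hv : MemLp v 2 volume) (hv' : MemLp v' 2 volume) :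
    IsWeakLap (fun x => u x - u' x) (fun x => v x - v' x) := by
  intro φ hφ
  rw [integral_sub_mul_of_memLp hu hu' (hφ.lapC.memLp 2),
    integral_sub_mul_of_memLp hv hv' (hφ.memLp 2), h φ hφ, h' φ hφ]

theorem IsWeakPDeriv.comp_smul_add (h : IsWeakPDeriv u i v) {r : ℝ} (hr : 0 < r) (x₀ : Esp N) :
    IsWeakPDeriv (fun x => u (r • x + x₀)) i (fun x => r * v (r • x + x₀)) := by
  intro φ hφ
  have hψ := hφ.comp_smul_add (inv_ne_zero hr.ne') (-(r⁻¹ • x₀))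
  have hrC : (r : ℂ) ≠ 0 := by exact_mod_cast hr.ne'
  have hpd : ∀ y, pderivC i φ (r⁻¹ • y + -(r⁻¹ • x₀)) =
      r * pderivC i (fun y => φ (r⁻¹ • y + -(r⁻¹ • x₀))) y := by
    intro y
    rw [pderivC_comp_smul_add (hφ.1.differentiable (by norm_num))]
    simp [hrC]
  have hweak := h _ hψ
  simp only [mul_assoc, integral_const_mul]
  rw [integral_comp_smul_add_mul u _ hr, integral_comp_smul_add_mul v _ hr]
  simp only [hpd, mul_left_comm _ (r : ℂ), integral_const_mul, hweak, smul_neg, mul_neg,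
    mul_smul_comm]

theorem IsWeakLap.comp_smul_add (h : IsWeakLap u v) {r : ℝ} (hr : 0 < r) (x₀ : Esp N) :
    IsWeakLap (fun x => u (r • x + x₀)) (fun x => (r : ℂ) ^ 2 * v (r • x + x₀)) := by
  intro φ hφ
  have hψ := hφ.comp_smul_add (inv_ne_zero hr.ne') (-(r⁻¹ • x₀))
  have hrC : (r : ℂ) ≠ 0 := by exact_mod_cast hr.ne'
  have hlap : ∀ y, lapC φ (r⁻¹ • y + -(r⁻¹ • x₀)) =
      (r : ℂ) ^ 2 * lapC (fun y => φ (r⁻¹ • y + -(r⁻¹ • x₀))) y := by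
    intro y
    rw [lapC_comp_smul_add hφ]
    simp [hrC]
  have hweak := h _ hψ
  simp only [mul_assoc, integral_const_mul]
  rw [integral_comp_smul_add_mul u _ hr, integral_comp_smul_add_mul v _ hr]
  simp only [hlap, mul_left_comm _ ((r : ℂ) ^ 2), integral_const_mul, hweak, mul_smul_comm]

end WeakDerivatives

namespace H2

variable {N : ℕ}

/-- The difference `U - V` of two elements of `H²`, with its weak derivatives. -/
def sub (U V : H2 N) : H2 N where
  u := fun x => U.u x - V.u x
  grad := fun i x => U.grad i x - V.grad i x
  lapl := fun x => U.lapl x - V.lapl x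
  u_mem := U.u_mem.sub V.u_mem
  grad_mem := fun i => (U.grad_mem i).sub (V.grad_mem i)
  lapl_mem := U.lapl_mem.sub V.lapl_mem
  grad_spec := fun i =>
    (U.grad_spec i).sub (V.grad_spec i) U.u_mem V.u_mem (U.grad_mem i) (V.grad_mem i)
  lapl_spec := U.lapl_spec.sub V.lapl_spec U.u_mem V.u_mem U.lapl_mem V.lapl_mem

/-- The function `c u(r x + x₀)` as an element of `H²`; it covers the dilations `u_t` and the
translations. -/
def aff (U : H2 N) (c r : ℝ) (hr : 0 < r) (x₀ : Esp N) : H2 N where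
  u := fun x => (c : ℂ) * U.u (r • x + x₀)
  grad := fun i x => ((c * r : ℝ) : ℂ) * U.grad i (r • x + x₀)
  lapl := fun x => ((c * r ^ 2 : ℝ) : ℂ) * U.lapl (r • x + x₀)
  u_mem := (memLp_two_comp_smul_add U.u_mem hr x₀).const_mul _
  grad_mem := fun i => (memLp_two_comp_smul_add (U.grad_mem i) hr x₀).const_mul _
  lapl_mem := (memLp_two_comp_smul_add U.lapl_mem hr x₀).const_mul _
  grad_spec := fun i => by
    simpa [mul_assoc] using ((U.grad_spec i).comp_smul_add hr x₀).const_mul c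
  lapl_spec := by simpa [mul_assoc] using (U.lapl_spec.comp_smul_add hr x₀).const_mul c

/-- The translate `u(· + x₀)`. -/
def translate (U : H2 N) (x₀ : Esp N) : H2 N := U.aff 1 1 one_pos x₀

section Norms

variable (U : H2 N)

theorem massSq_nonneg : 0 ≤ U.massSq := integral_sq_norm_nonneg _ _

theorem lapSq_nonneg : 0 ≤ U.lapSq := integral_sq_norm_nonneg _ _

theorem gradSq_nonneg : 0 ≤ U.gradSq := Finset.sum_nonneg fun _ _ => integral_sq_norm_nonneg _ _

theorem pPow_nonneg (σ : ℝ) : 0 ≤ U.pPow σ := integral_nonneg fun _ => by positivity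

theorem integral_sq_norm_grad_le_gradSq (i : Fin N) : ∫ x, ‖U.grad i x‖ ^ 2 ≤ U.gradSq :=
  Finset.single_le_sum (f := fun i => ∫ x, ‖U.grad i x‖ ^ 2)
    (fun _ _ => integral_sq_norm_nonneg _ _) (Finset.mem_univ i)

theorem massSq_pos_iff : 0 < U.massSq ↔ U.Nontriv := by
  have hzero : U.massSq = 0 ↔ U.u =ᵐ[volume] 0 := by
    rw [massSq, integral_eq_zero_iff_of_nonneg (fun _ => by positivity) U.u_mem.norm.integrable_sq]
    refine eventually_congr (Eventually.of_forall fun x => ?_)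
    simp
  rw [U.massSq_nonneg.lt_iff_ne', ne_eq, hzero, Nontriv]

variable (c : ℝ) {r : ℝ} (hr : 0 < r) (x₀ : Esp N)

theorem massSq_aff : (U.aff c r hr x₀).massSq = c ^ 2 * (r ^ N)⁻¹ * U.massSq :=
  integral_sq_norm_const_mul_comp_smul_add _ _ hr _

theorem lapSq_aff : (U.aff c r hr x₀).lapSq = c ^ 2 * (r ^ N)⁻¹ * r ^ 4 * U.lapSq := by
  rw [lapSq, aff, integral_sq_norm_const_mul_comp_smul_add _ _ hr, lapSq]
  ring

theorem gradSq_aff : (U.aff c r hr x₀).gradSq = c ^ 2 * (r ^ N)⁻¹ * r ^ 2 * U.gradSq := by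
  simp only [gradSq, aff, integral_sq_norm_const_mul_comp_smul_add _ _ hr, Finset.mul_sum]
  exact Finset.sum_congr rfl fun i _ => by ring

theorem pPow_aff (σ : ℝ) :
    (U.aff c r hr x₀).pPow σ = |c| ^ (2 * σ + 2) * (r ^ N)⁻¹ * U.pPow σ := by
  unfold pPow aff
  rw [mul_assoc, ← smul_eq_mul (r ^ N)⁻¹,
    ← integral_comp_smul_add (fun x => ‖U.u x‖ ^ (2 * σ + 2)) hr x₀, ← integral_const_mul]
  simp [Real.mul_rpow]

@[simp] theorem massSq_translate : (U.translate x₀).massSq = U.massSq := by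
  simp [translate, massSq_aff]

@[simp] theorem lapSq_translate : (U.translate x₀).lapSq = U.lapSq := by
  simp [translate, lapSq_aff]

@[simp] theorem gradSq_translate : (U.translate x₀).gradSq = U.gradSq := by
  simp [translate, gradSq_aff]

@[simp] theorem pPow_translate (σ : ℝ) : (U.translate x₀).pPow σ = U.pPow σ := by
  simp [translate, pPow_aff]

end Norms

end H2

section SchwartzTruncation

variable {N : ℕ}

theorem coe_lineDerivOp_single_eq_pderivC (φ : 𝓢(Esp N, ℂ)) (i : Fin N) :
    (∂_{EuclideanSpace.single i (1 : ℝ)} φ : 𝓢(Esp N, ℂ)) = pderivC i φ := by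
  ext x
  rw [SchwartzMap.lineDerivOp_apply_eq_fderiv]
  rfl

theorem memLp_pderivC_schwartz (φ : 𝓢(Esp N, ℂ)) (i : Fin N) :
    MemLp (pderivC i φ) 2 volume := by
  rw [← coe_lineDerivOp_single_eq_pderivC]
  exact SchwartzMap.memLp _ 2 volume

/-- A smooth complex-valued cutoff, equal to `1` on the unit ball, used to truncate Schwartz
functions. -/
def unitCutoff (x : Esp N) : ℂ :=
  ((⟨1, 2, one_pos, one_lt_two⟩ : ContDiffBump (0 : Esp N)) x : ℝ)

theorem testFun_unitCutoff : TestFun (unitCutoff : Esp N → ℂ) :=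
  ⟨Complex.ofRealCLM.contDiff.comp (ContDiffBump.contDiff _),
    (ContDiffBump.hasCompactSupport _).comp_left (g := fun x : ℝ => (x : ℂ)) Complex.ofReal_zero⟩

theorem norm_unitCutoff_le_one (x : Esp N) : ‖unitCutoff x‖ ≤ 1 := by
  rw [unitCutoff, Complex.norm_real, Real.norm_of_nonneg (ContDiffBump.nonneg _)]
  exact ContDiffBump.le_one _

theorem unitCutoff_eq_one {x : Esp N} (hx : ‖x‖ ≤ 1) : unitCutoff x = 1 := by
  rw [unitCutoff, ContDiffBump.one_of_mem_closedBall _ (mem_closedBall_zero_iff.2 hx),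
    Complex.ofReal_one]

/-- The compactly supported truncation `χ(x / (n + 1)) φ(x)` of a Schwartz function `φ`. -/
def schwartzTrunc (φ : 𝓢(Esp N, ℂ)) (n : ℕ) (x : Esp N) : ℂ :=
  unitCutoff (((n : ℝ) + 1)⁻¹ • x + 0) * φ x

variable (φ : 𝓢(Esp N, ℂ))

theorem testFun_schwartzTrunc (n : ℕ) : TestFun (schwartzTrunc φ n) := by
  have hχ : TestFun fun x : Esp N => unitCutoff (((n : ℝ) + 1)⁻¹ • x + 0) :=
    testFun_unitCutoff.comp_smul_add (by positivity) 0
  exact ⟨hχ.1.mul (φ.smooth _), hχ.2.mul_right⟩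

theorem norm_schwartzTrunc_le (n : ℕ) (x : Esp N) : ‖schwartzTrunc φ n x‖ ≤ ‖φ x‖ := by
  rw [schwartzTrunc, norm_mul]
  exact mul_le_of_le_one_left (norm_nonneg _) (norm_unitCutoff_le_one _)

theorem exists_norm_pderivC_schwartzTrunc_le (i : Fin N) :
    ∃ C, ∀ n x, ‖pderivC i (schwartzTrunc φ n) x‖ ≤ C * ‖φ x‖ + ‖pderivC i φ x‖ := by
  have hdχ := testFun_unitCutoff.pderivC i
  obtain ⟨C, hC⟩ := hdχ.1.continuous.bounded_above_of_compact_support hdχ.2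
  refine ⟨C, fun n x => ?_⟩
  have hχ : TestFun fun x : Esp N => unitCutoff (((n : ℝ) + 1)⁻¹ • x + 0) :=
    testFun_unitCutoff.comp_smul_add (by positivity) 0
  have hscale : ‖((((n : ℝ) + 1)⁻¹ : ℝ) : ℂ)‖ ≤ 1 := by
    rw [Complex.norm_real, Real.norm_of_nonneg (by positivity)]
    exact inv_le_one_of_one_le₀ (by linarith [n.cast_nonneg (α := ℝ)])
  have hleibniz : pderivC i (schwartzTrunc φ n) x =
      ((((n : ℝ) + 1)⁻¹ : ℝ) : ℂ) * pderivC i unitCutoff (((n : ℝ) + 1)⁻¹ • x + 0) * φ x +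
        unitCutoff (((n : ℝ) + 1)⁻¹ • x + 0) * pderivC i φ x := by
    rw [← pderivC_comp_smul_add (testFun_unitCutoff.1.differentiable (by norm_num))]
    unfold pderivC schwartzTrunc
    rw [fderiv_fun_mul (hχ.1.differentiable (by norm_num) x) φ.differentiableAt]
    simp only [add_apply, smul_apply, smul_eq_mul]
    ring
  rw [hleibniz]
  refine (norm_add_le _ _).trans ?_
  simp only [norm_mul]
  calc _ ≤ 1 * C * ‖φ x‖ + 1 * ‖pderivC i φ x‖ := by
        gcongr
        exacts [hC _, norm_unitCutoff_le_one _]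
    _ = _ := by rw [one_mul, one_mul]

theorem eventually_schwartzTrunc_eventuallyEq (x : Esp N) :
    ∀ᶠ n in atTop, schwartzTrunc φ n =ᶠ[𝓝 x] φ := by
  obtain ⟨n₀, hn₀⟩ := exists_nat_ge (‖x‖ + 1)
  filter_upwards [eventually_ge_atTop n₀] with n hn
  filter_upwards [Metric.ball_mem_nhds x one_pos] with y hy
  have hy_norm : ‖y‖ ≤ n + 1 := by
    have hyx : ‖y - x‖ < 1 := by simpa [dist_eq_norm] using hy
    have hcast : (n₀ : ℝ) ≤ n := by exact_mod_cast hn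
    linarith [norm_le_norm_add_norm_sub' y x]
  rw [schwartzTrunc, unitCutoff_eq_one, one_mul]
  rw [add_zero, norm_smul, Real.norm_of_nonneg (by positivity)]
  exact inv_mul_le_one_of_le₀ hy_norm (by positivity)

theorem tendsto_integral_mul_of_dominated {α : Type*} {mα : MeasurableSpace α} {μ : Measure α}
    {f : α → ℂ} {g : ℕ → α → ℂ} {g' : α → ℂ} {bound : α → ℝ} (hf : MemLp f 2 μ)
    (hbound : MemLp bound 2 μ) (hg : ∀ n, AEStronglyMeasurable (g n) μ)
    (hle : ∀ n x, ‖g n x‖ ≤ bound x) (hlim : ∀ x, Tendsto (fun n => g n x) atTop (𝓝 (g' x))) :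
    Tendsto (fun n => ∫ x, f x * g n x ∂μ) atTop (𝓝 (∫ x, f x * g' x ∂μ)) := by
  refine tendsto_integral_of_dominated_convergence (fun x => ‖f x‖ * bound x)
    (fun n => hf.1.mul (hg n)) (hf.norm.integrable_mul hbound)
    (fun n => Eventually.of_forall fun x => ?_)
    (Eventually.of_forall fun x => (hlim x).const_mul _)
  rw [norm_mul]
  exact mul_le_mul_of_nonneg_left (hle n x) (norm_nonneg _)

theorem tendsto_integral_mul_schwartzTrunc {f : Esp N → ℂ} (hf : MemLp f 2 volume) :
    Tendsto (fun n => ∫ x, f x * schwartzTrunc φ n x) atTop (𝓝 (∫ x, f x * φ x)) := by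
  refine tendsto_integral_mul_of_dominated hf (φ.memLp 2).norm
    (fun n => (testFun_schwartzTrunc φ n).1.continuous.aestronglyMeasurable)
    (norm_schwartzTrunc_le φ) fun x => tendsto_const_nhds.congr' ?_
  filter_upwards [eventually_schwartzTrunc_eventuallyEq φ x] with n hn using hn.eq_of_nhds.symm

theorem tendsto_integral_mul_pderivC_schwartzTrunc {f : Esp N → ℂ} (hf : MemLp f 2 volume)
    (i : Fin N) :
    Tendsto (fun n => ∫ x, f x * pderivC i (schwartzTrunc φ n) x) atTop
      (𝓝 (∫ x, f x * pderivC i φ x)) := by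
  obtain ⟨C, hC⟩ := exists_norm_pderivC_schwartzTrunc_le φ i
  refine tendsto_integral_mul_of_dominated hf
    (((φ.memLp 2).norm.const_mul C).add (memLp_pderivC_schwartz φ i).norm)
    (fun n => ((testFun_schwartzTrunc φ n).pderivC i).1.continuous.aestronglyMeasurable)
    hC fun x => tendsto_const_nhds.congr' ?_
  filter_upwards [eventually_schwartzTrunc_eventuallyEq φ x] with n hn
  unfold pderivC
  rw [hn.fderiv_eq]

end SchwartzTruncation

section WeakDivergence

variable {N : ℕ} {s : Finset (Fin N)} {g : Fin N → Esp N → ℂ} {l : Esp N → ℂ}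

/-- `l` is the weak partial divergence `∑_{i ∈ s} ∂_i g_i`. The choices `s = {i}` and
`s = univ` give the weak partial derivatives and, applied to a weak gradient, the weak
Laplacian. -/
def IsWeakDiv (s : Finset (Fin N)) (g : Fin N → Esp N → ℂ) (l : Esp N → ℂ) : Prop :=
  ∀ φ : Esp N → ℂ, TestFun φ → ∑ i ∈ s, ∫ x, g i x * pderivC i φ x = -∫ x, l x * φ x

theorem isWeakDiv_singleton_iff {i : Fin N} : IsWeakDiv {i} g l ↔ IsWeakPDeriv (g i) i l := by
  simp only [IsWeakDiv, Finset.sum_singleton, IsWeakPDeriv]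

theorem isWeakDiv_univ_iff {u : Esp N → ℂ} (hu : MemLp u 2 volume)
    (hgrad : ∀ i, IsWeakPDeriv u i (g i)) : IsWeakDiv Finset.univ g l ↔ IsWeakLap u l := by
  refine forall₂_congr fun φ hφ => ?_
  have hlap : ∫ x, u x * lapC φ x = -∑ i, ∫ x, g i x * pderivC i φ x := by
    have hint (i : Fin N) : Integrable (fun x => u x * pderivC i (pderivC i φ) x) volume :=
      hu.integrable_mul (((hφ.pderivC i).pderivC i).memLp 2)
    simp only [lapC, Finset.mul_sum]
    rw [integral_finsetSum _ fun i _ => hint i, ← Finset.sum_neg_distrib]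
    exact Finset.sum_congr rfl fun i _ => hgrad i _ (hφ.pderivC i)
  rw [hlap, neg_eq_iff_eq_neg]

theorem IsWeakDiv.sum_integral_mul_pderivC_schwartz (h : IsWeakDiv s g l)
    (hg : ∀ i, MemLp (g i) 2 volume) (hl : MemLp l 2 volume) (φ : 𝓢(Esp N, ℂ)) :
    ∑ i ∈ s, ∫ x, g i x * pderivC i φ x = -∫ x, l x * φ x := by
  refine tendsto_nhds_unique
    (tendsto_finsetSum s fun i _ => tendsto_integral_mul_pderivC_schwartzTrunc φ (hg i) i)
    ((tendsto_integral_mul_schwartzTrunc φ hl).neg.congr fun n => ?_)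
  rw [h _ (testFun_schwartzTrunc φ n)]

end WeakDivergence

section FourierTransform

variable {N : ℕ} {f g : Esp N → ℂ}

theorem ae_eq_of_integral_schwartz_mul (hf : LocallyIntegrable f volume)
    (hg : LocallyIntegrable g volume)
    (h : ∀ φ : 𝓢(Esp N, ℂ), ∫ x, φ x * f x = ∫ x, φ x * g x) : f =ᵐ[volume] g := by
  refine ae_eq_of_integral_contDiff_smul_eq hf hg fun k hk hk_supp => ?_
  have hsupp : HasCompactSupport (Complex.ofRealCLM ∘ k) := hk_supp.comp_left rfl
  have hsmooth : ContDiff ℝ (⊤ : ℕ∞) (Complex.ofRealCLM ∘ k) := by fun_prop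
  simpa using h (hsupp.toSchwartzMap hsmooth)

/-- The Fourier transform of an `L²` function, as a function; it is defined up to null sets. -/
def fourierL2 (hf : MemLp f 2 volume) : Esp N → ℂ :=
  (𝓕 (MemLp.toLp f hf) : Lp (α := Esp N) ℂ 2 volume)

theorem memLp_fourierL2 (hf : MemLp f 2 volume) : MemLp (fourierL2 hf) 2 volume := Lp.memLp _

theorem integral_mul_fourierL2 (hf : MemLp f 2 volume) (φ : 𝓢(Esp N, ℂ)) :
    ∫ x, φ x * fourierL2 hf x = ∫ x, 𝓕 φ x * f x := by
  have h := congrArg (fun T => T φ) (Lp.fourier_toTemperedDistribution_eq (hf.toLp f))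
  simp only [TemperedDistribution.fourier_apply, Lp.toTemperedDistribution_apply,
    smul_eq_mul] at h
  rw [fourierL2, ← h]
  refine integral_congr_ae ?_
  filter_upwards [hf.coeFn_toLp] with x hx
  rw [hx]

theorem fourierL2_sub (hf : MemLp f 2 volume) (hg : MemLp g 2 volume) :
    fourierL2 (hf.sub hg) =ᵐ[volume] fun x => fourierL2 hf x - fourierL2 hg x := by
  have hsub : 𝓕 (hf.toLp f - hg.toLp g) = 𝓕 (hf.toLp f) - 𝓕 (hg.toLp g) :=
    map_sub (Lp.fourierTransformₗᵢ (Esp N) ℂ) _ _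
  rw [fourierL2, MemLp.toLp_sub hf hg, hsub]
  exact Lp.coeFn_sub _ _

theorem integral_sq_norm_fourierL2 (hf : MemLp f 2 volume) :
    ∫ x, ‖fourierL2 hf x‖ ^ 2 = ∫ x, ‖f x‖ ^ 2 := by
  have hplancherel : eLpNorm (fourierL2 hf) 2 volume = eLpNorm f 2 volume := by
    rw [← ENNReal.toReal_eq_toReal_iff' (memLp_fourierL2 hf).2.ne hf.2.ne, ← Lp.norm_toLp f hf,
      ← Lp.norm_fourier_eq, Lp.norm_def, fourierL2]
  rwa [eLpNorm_two_eq_ofReal_sqrt (memLp_fourierL2 hf), eLpNorm_two_eq_ofReal_sqrt hf,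
    ENNReal.ofReal_eq_ofReal_iff (Real.sqrt_nonneg _) (Real.sqrt_nonneg _),
    Real.sqrt_inj (integral_sq_norm_nonneg _ _) (integral_sq_norm_nonneg _ _)] at hplancherel

/-- The symbol `2πi ξ_i` of the `i`-th partial derivative. -/
def pderivSymbol (i : Fin N) (ξ : Esp N) : ℂ := 2 * Real.pi * Complex.I * (ξ i : ℂ)

theorem continuous_pderivSymbol (i : Fin N) : Continuous (pderivSymbol i : Esp N → ℂ) := by
  unfold pderivSymbol; fun_prop

theorem norm_pderivSymbol_sq (i : Fin N) (ξ : Esp N) :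
    ‖pderivSymbol i ξ‖ ^ 2 = 4 * Real.pi ^ 2 * ξ i ^ 2 := by
  simp only [pderivSymbol, norm_mul, mul_pow, Complex.norm_real, Real.norm_eq_abs, sq_abs,
    Complex.norm_I, Complex.norm_ofNat]
  ring

theorem sum_pderivSymbol_sq (ξ : Esp N) :
    ∑ i, pderivSymbol i ξ ^ 2 = -((4 * Real.pi ^ 2 * ‖ξ‖ ^ 2 : ℝ) : ℂ) := by
  simp only [pderivSymbol, mul_pow, Complex.I_sq, ← Finset.mul_sum, EuclideanSpace.norm_sq_eq,
    Real.norm_eq_abs, sq_abs]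
  push_cast
  ring

theorem exists_pderivC_fourier_eq (i : Fin N) (φ : 𝓢(Esp N, ℂ)) :
    ∃ ψ : 𝓢(Esp N, ℂ), (∀ ξ, ψ ξ = -(pderivSymbol i ξ * φ ξ)) ∧
      pderivC i (𝓕 φ : 𝓢(Esp N, ℂ)) = (𝓕 ψ : 𝓢(Esp N, ℂ)) := by
  refine ⟨-(2 * Real.pi * Complex.I) • (SchwartzMap.smulLeftCLM ℂ
    fun x : Esp N => inner ℝ x (EuclideanSpace.single i (1 : ℝ))) φ, fun ξ => ?_, ?_⟩
  · have hgrowth : (fun y : Esp N =>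
        inner ℝ y (EuclideanSpace.single i (1 : ℝ))).HasTemperateGrowth := by fun_prop
    rw [smul_apply, SchwartzMap.smulLeftCLM_apply_apply hgrowth,
      EuclideanSpace.inner_single_right, conj_trivial, one_mul, pderivSymbol, smul_eq_mul,
      Complex.real_smul]
    ring
  · rw [← coe_lineDerivOp_single_eq_pderivC, SchwartzMap.lineDerivOp_fourier_eq]

theorem integrable_mul_pderivSymbol_mul_fourierL2 (hf : MemLp f 2 volume) (i : Fin N)
    (φ : 𝓢(Esp N, ℂ)) :
    Integrable (fun ξ => φ ξ * (pderivSymbol i ξ * fourierL2 hf ξ)) volume := by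
  obtain ⟨ψ, hψ, -⟩ := exists_pderivC_fourier_eq i φ
  refine ((ψ.memLp 2 volume).integrable_mul (memLp_fourierL2 hf)).neg.congr
    (Eventually.of_forall fun ξ => ?_)
  simp only [Pi.neg_apply, Pi.mul_apply, hψ]
  ring

theorem integral_mul_pderivC_fourier (hf : MemLp f 2 volume) (i : Fin N) (φ : 𝓢(Esp N, ℂ)) :
    ∫ x, f x * pderivC i (𝓕 φ : 𝓢(Esp N, ℂ)) x =
      -∫ ξ, φ ξ * (pderivSymbol i ξ * fourierL2 hf ξ) := by
  obtain ⟨ψ, hψ, hderiv⟩ := exists_pderivC_fourier_eq i φ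
  simp only [hderiv, mul_comm (f _)]
  rw [← integral_mul_fourierL2 hf, ← integral_neg]
  congr 1 with ξ
  rw [hψ]
  ring

theorem isWeakDiv_iff_fourierL2 {s : Finset (Fin N)} {g : Fin N → Esp N → ℂ} {l : Esp N → ℂ}
    (hg : ∀ i, MemLp (g i) 2 volume) (hl : MemLp l 2 volume) :
    IsWeakDiv s g l ↔
      fourierL2 hl =ᵐ[volume] fun ξ => ∑ i ∈ s, pderivSymbol i ξ * fourierL2 (hg i) ξ := by
  have hparseval (φ : 𝓢(Esp N, ℂ)) :
      ∑ i ∈ s, ∫ x, g i x * pderivC i (𝓕 φ : 𝓢(Esp N, ℂ)) x =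
        -∫ ξ, φ ξ * ∑ i ∈ s, pderivSymbol i ξ * fourierL2 (hg i) ξ := by
    simp only [Finset.mul_sum, integral_mul_pderivC_fourier (hg _), Finset.sum_neg_distrib]
    rw [integral_finsetSum _ fun i _ => integrable_mul_pderivSymbol_mul_fourierL2 (hg i) i φ]
  refine ⟨fun h => ae_eq_of_integral_schwartz_mul
    ((memLp_fourierL2 hl).locallyIntegrable one_le_two)
    (locallyIntegrable_finsetSum _ fun i _ => ?_) fun φ => ?_, fun h φ hφ => ?_⟩
  · have hloc := (memLp_fourierL2 (hg i)).locallyIntegrable one_le_two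
    exact locallyIntegrableOn_univ.1 <| (hloc.locallyIntegrableOn Set.univ).continuousOn_mul
      (continuous_pderivSymbol i).continuousOn isOpen_univ.isLocallyClosed
  · rw [integral_mul_fourierL2, ← neg_inj, ← hparseval,
      h.sum_integral_mul_pderivC_schwartz hg hl]
    simp only [mul_comm]
  · set ψ : 𝓢(Esp N, ℂ) := 𝓕⁻ (hφ.2.toSchwartzMap hφ.1)
    have hψ : φ = (𝓕 ψ : 𝓢(Esp N, ℂ)) := by
      rw [FourierTransform.fourier_fourierInv_eq]
      rfl
    rw [hψ, hparseval, neg_inj]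
    simp only [mul_comm (l _)]
    rw [← integral_mul_fourierL2 hl]
    refine integral_congr_ae ?_
    filter_upwards [h] with ξ hξ
    rw [hξ]

theorem isWeakPDeriv_iff_fourierL2 {u v : Esp N → ℂ} (hu : MemLp u 2 volume)
    (hv : MemLp v 2 volume) (i : Fin N) :
    IsWeakPDeriv u i v ↔
      fourierL2 hv =ᵐ[volume] fun ξ => pderivSymbol i ξ * fourierL2 hu ξ := by
  rw [← isWeakDiv_singleton_iff (g := fun _ => u), isWeakDiv_iff_fourierL2 (fun _ => hu) hv]
  simp only [Finset.sum_singleton]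

theorem isWeakLap_iff_fourierL2 {u l : Esp N → ℂ} {g : Fin N → Esp N → ℂ}
    (hu : MemLp u 2 volume) (hg : ∀ i, MemLp (g i) 2 volume) (hl : MemLp l 2 volume)
    (hgrad : ∀ i, IsWeakPDeriv u i (g i)) :
    IsWeakLap u l ↔
      fourierL2 hl =ᵐ[volume] fun ξ => -((4 * Real.pi ^ 2 * ‖ξ‖ ^ 2 : ℝ) : ℂ) * fourierL2 hu ξ := by
  rw [← isWeakDiv_univ_iff hu hgrad, isWeakDiv_iff_fourierL2 hg hl]
  have hdiv : (fun ξ => ∑ i, pderivSymbol i ξ * fourierL2 (hg i) ξ) =ᵐ[volume]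
      fun ξ => -((4 * Real.pi ^ 2 * ‖ξ‖ ^ 2 : ℝ) : ℂ) * fourierL2 hu ξ := by
    filter_upwards [eventually_all.2 fun i =>
      (isWeakPDeriv_iff_fourierL2 hu (hg i) i).1 (hgrad i)] with ξ hξ
    simp only [hξ, ← sum_pderivSymbol_sq, Finset.sum_mul]
    exact Finset.sum_congr rfl fun i _ => by ring
  exact ⟨fun h => h.trans hdiv, fun h => h.trans hdiv.symm⟩

end FourierTransform

namespace H2

variable {N : ℕ} (U : H2 N)

theorem fourierL2_grad (i : Fin N) :
    fourierL2 (U.grad_mem i) =ᵐ[volume] fun ξ => pderivSymbol i ξ * fourierL2 U.u_mem ξ :=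
  (isWeakPDeriv_iff_fourierL2 U.u_mem (U.grad_mem i) i).1 (U.grad_spec i)

theorem fourierL2_lapl :
    fourierL2 U.lapl_mem =ᵐ[volume]
      fun ξ => -((4 * Real.pi ^ 2 * ‖ξ‖ ^ 2 : ℝ) : ℂ) * fourierL2 U.u_mem ξ :=
  (isWeakLap_iff_fourierL2 U.u_mem U.grad_mem U.lapl_mem U.grad_spec).1 U.lapl_spec

theorem norm_fourierL2_lapl :
    ∀ᵐ ξ, ‖fourierL2 U.lapl_mem ξ‖ = 4 * Real.pi ^ 2 * ‖ξ‖ ^ 2 * ‖fourierL2 U.u_mem ξ‖ := by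
  filter_upwards [U.fourierL2_lapl] with ξ hξ
  rw [hξ, norm_mul, norm_neg, Complex.norm_real, Real.norm_of_nonneg (by positivity)]

theorem gradSq_eq_integral_fourierL2 :
    U.gradSq = ∫ ξ, ‖fourierL2 U.lapl_mem ξ‖ * ‖fourierL2 U.u_mem ξ‖ := by
  simp only [gradSq, ← integral_sq_norm_fourierL2 (U.grad_mem _)]
  rw [← integral_finsetSum _ fun i _ => (memLp_fourierL2 _).norm.integrable_sq]
  refine integral_congr_ae ?_
  filter_upwards [U.norm_fourierL2_lapl, eventually_all.2 U.fourierL2_grad] with ξ hlap hgrad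
  simp only [hlap, hgrad, norm_mul, mul_pow, norm_pderivSymbol_sq, ← Finset.sum_mul,
    ← Finset.mul_sum, EuclideanSpace.norm_sq_eq, Real.norm_eq_abs, sq_abs]
  ring

theorem gradSq_sq_le : U.gradSq ^ 2 ≤ U.lapSq * U.massSq := by
  rw [gradSq_eq_integral_fourierL2, lapSq, massSq, ← integral_sq_norm_fourierL2 U.lapl_mem,
    ← integral_sq_norm_fourierL2 U.u_mem]
  exact sq_integral_norm_mul_norm_le (memLp_fourierL2 _) (memLp_fourierL2 _)

theorem gradSq_le_sqrt_mul_sqrt : U.gradSq ≤ √U.lapSq * √U.massSq := by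
  rw [← Real.sqrt_mul U.lapSq_nonneg]
  exact Real.le_sqrt_of_sq_le U.gradSq_sq_le

theorem lapSq_pos (hN : 1 ≤ N) (hU : U.Nontriv) : 0 < U.lapSq := by
  have : Nonempty (Fin N) := ⟨⟨0, hN⟩⟩
  refine U.lapSq_nonneg.lt_of_ne fun hlap => (U.massSq_pos_iff.2 hU).ne' ?_
  rw [lapSq, ← integral_sq_norm_fourierL2 U.lapl_mem, eq_comm,
    integral_eq_zero_iff_of_nonneg (fun _ => by positivity)
      (memLp_fourierL2 _).norm.integrable_sq] at hlap
  rw [massSq, ← integral_sq_norm_fourierL2 U.u_mem]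
  refine integral_eq_zero_of_ae ?_
  filter_upwards [hlap, U.norm_fourierL2_lapl, Measure.ae_ne volume 0] with ξ hzero hnorm hξ
  simpa [hnorm, hξ, Real.pi_ne_zero] using hzero

end H2

section LowPass

variable {N : ℕ} (Φ φ : 𝓢(Esp N, ℂ)) {f h : Esp N → ℂ}

/-- The Fourier multiplier `Φ(D)`, written as an integral operator with kernel `𝓕 Φ` so that it is
defined pointwise. With `Φ` a cutoff it keeps the low frequencies. -/
def lowPass (f : Esp N → ℂ) (x : Esp N) : ℂ := ∫ y, (𝓕 Φ : 𝓢(Esp N, ℂ)) (y - x) * f y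

theorem fourierInv_compSubConst_fourier (x ξ : Esp N) :
    (𝓕⁻ ((𝓕 Φ).compSubConstCLM ℂ x) : 𝓢(Esp N, ℂ)) ξ =
      Complex.exp ((2 * Real.pi * inner ℝ ξ x : ℝ) * Complex.I) * Φ ξ := by
  have hinv : Φ ξ = 𝓕⁻ ((𝓕 Φ : 𝓢(Esp N, ℂ)) : Esp N → ℂ) ξ := by
    rw [← SchwartzMap.fourierInv_coe, FourierTransform.fourierInv_fourier_eq]
  rw [SchwartzMap.fourierInv_coe, hinv, Real.fourierInv_eq', Real.fourierInv_eq',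
    ← integral_const_mul, ← integral_add_right_eq_self _ x]
  congr 1 with y
  rw [SchwartzMap.compSubConstCLM_apply, add_sub_cancel_right, smul_eq_mul, smul_eq_mul,
    ← mul_assoc, ← Complex.exp_add, inner_add_left, real_inner_comm ξ x]
  push_cast
  ring_nf

theorem integral_mul_eq_integral_fourierInv_mul (hf : MemLp f 2 volume) :
    ∫ x, φ x * f x = ∫ ξ, (𝓕⁻ φ : 𝓢(Esp N, ℂ)) ξ * fourierL2 hf ξ := by
  rw [integral_mul_fourierL2, FourierTransform.fourier_fourierInv_eq]

theorem lowPass_eq_fourierInv (hf : MemLp f 2 volume) (x : Esp N) :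
    lowPass Φ f x = 𝓕⁻ (fun ξ => Φ ξ * fourierL2 hf ξ) x := by
  have hkernel : lowPass Φ f x = ∫ y, ((𝓕 Φ).compSubConstCLM ℂ x : 𝓢(Esp N, ℂ)) y * f y := rfl
  rw [hkernel, integral_mul_eq_integral_fourierInv_mul _ hf, Real.fourierInv_eq']
  congr 1 with ξ
  rw [fourierInv_compSubConst_fourier, smul_eq_mul, mul_assoc]

theorem continuous_fourierInv_of_integrable (hh : Integrable h volume) :
    Continuous (𝓕⁻ h : Esp N → ℂ) := by
  have hneg : 𝓕⁻ h = fun x => 𝓕 h (-x) := funext (Real.fourierInv_eq_fourier_neg h)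
  rw [hneg]
  exact (VectorFourier.fourierIntegral_continuous (L := innerₗ (Esp N))
    Real.continuous_fourierChar continuous_inner hh).comp continuous_neg

theorem integral_mul_fourierInv (hh : Integrable h volume) :
    ∫ x, φ x * 𝓕⁻ h x = ∫ ξ, (𝓕⁻ φ : 𝓢(Esp N, ℂ)) ξ * h ξ := by
  have hflip : (-innerₗ (Esp N)).flip = -innerₗ (Esp N) := by
    ext x y
    simp [real_inner_comm]
  have hswap := VectorFourier.integral_fourierIntegral_smul_eq_flip (L := -innerₗ (Esp N))
    (μ := volume) (ν := volume) Real.continuous_fourierChar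
    (continuous_inner (𝕜 := ℝ) (E := Esp N)).neg φ.integrable hh
  rw [hflip] at hswap
  rw [SchwartzMap.fourierInv_coe]
  exact hswap.symm

theorem exists_fourierL2_eq (hh : MemLp h 2 volume) :
    ∃ g, ∃ hg : MemLp g 2 volume, fourierL2 hg =ᵐ[volume] h := by
  refine ⟨(𝓕⁻ (hh.toLp h) : Lp (α := Esp N) ℂ 2 volume), Lp.memLp _, ?_⟩
  rw [fourierL2, Lp.toLp_coeFn, FourierTransform.fourier_fourierInv_eq]
  exact hh.coeFn_toLp

theorem memLp_schwartz_mul (hf : MemLp f 2 volume) : MemLp (fun x => Φ x * f x) 2 volume :=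
  hf.mul (Φ.memLp ⊤)

theorem continuous_lowPass (hf : MemLp f 2 volume) : Continuous (lowPass Φ f) := by
  rw [funext (lowPass_eq_fourierInv Φ hf)]
  exact continuous_fourierInv_of_integrable ((Φ.memLp 2).integrable_mul (memLp_fourierL2 hf))

theorem exists_memLp_lowPass (hf : MemLp f 2 volume) :
    ∃ h : MemLp (lowPass Φ f) 2 volume,
      fourierL2 h =ᵐ[volume] fun ξ => Φ ξ * fourierL2 hf ξ := by
  have hint : Integrable (fun ξ => Φ ξ * fourierL2 hf ξ) volume :=
    (Φ.memLp 2).integrable_mul (memLp_fourierL2 hf)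
  obtain ⟨g, hg, hgΦ⟩ := exists_fourierL2_eq (memLp_schwartz_mul Φ (memLp_fourierL2 hf))
  have hae : g =ᵐ[volume] lowPass Φ f := by
    refine ae_eq_of_integral_schwartz_mul (hg.locallyIntegrable one_le_two)
      (continuous_lowPass Φ hf).locallyIntegrable fun φ => ?_
    rw [funext (lowPass_eq_fourierInv Φ hf), integral_mul_fourierInv φ hint,
      integral_mul_eq_integral_fourierInv_mul φ hg]
    refine integral_congr_ae ?_
    filter_upwards [hgΦ] with ξ hξ
    rw [hξ]
  have hlow := hg.ae_eq hae
  refine ⟨hlow, ?_⟩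
  rwa [fourierL2, (MemLp.toLp_eq_toLp_iff hlow hg).2 hae.symm]

theorem memLp_lowPass (hf : MemLp f 2 volume) : MemLp (lowPass Φ f) 2 volume :=
  (exists_memLp_lowPass Φ hf).1

theorem fourierL2_lowPass (hf : MemLp f 2 volume) :
    fourierL2 (memLp_lowPass Φ hf) =ᵐ[volume] fun ξ => Φ ξ * fourierL2 hf ξ :=
  (exists_memLp_lowPass Φ hf).2

theorem fourierL2_sub_lowPass (hf : MemLp f 2 volume) :
    fourierL2 (hf.sub (memLp_lowPass Φ hf)) =ᵐ[volume] fun ξ => (1 - Φ ξ) * fourierL2 hf ξ := by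
  filter_upwards [fourierL2_sub hf (memLp_lowPass Φ hf), fourierL2_lowPass Φ hf] with ξ hsub hlow
  rw [hsub, hlow, one_sub_mul]

theorem norm_lowPass_le (hf : MemLp f 2 volume) (x : Esp N) :
    ‖lowPass Φ f x‖ ≤ √(∫ y, ‖(𝓕 Φ : 𝓢(Esp N, ℂ)) y‖ ^ 2) * √(∫ y, ‖f y‖ ^ 2) := by
  have hkernel : MemLp ((𝓕 Φ).compSubConstCLM ℂ x : 𝓢(Esp N, ℂ)) 2 volume :=
    SchwartzMap.memLp _ 2 volume
  rw [← Real.sqrt_mul (integral_sq_norm_nonneg _ _),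
    ← integral_sub_right_eq_self (fun y => ‖(𝓕 Φ : 𝓢(Esp N, ℂ)) y‖ ^ 2) x]
  refine (norm_integral_le_integral_norm _).trans (Real.le_sqrt_of_sq_le ?_)
  simp only [norm_mul]
  exact sq_integral_norm_mul_norm_le hkernel hf

theorem WeakL2Tendsto.lowPass {f : ℕ → Esp N → ℂ} {g : Esp N → ℂ}
    (hfg : WeakL2Tendsto volume f g) (x : Esp N) :
    Tendsto (fun n => _root_.lowPass Φ (f n) x) atTop (𝓝 (_root_.lowPass Φ g x)) :=
  hfg _ (SchwartzMap.memLp ((𝓕 Φ).compSubConstCLM ℂ x) 2 volume)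

end LowPass

section FrequencyCutoff

variable {N : ℕ} {Φ : 𝓢(Esp N, ℂ)} {R : ℝ}

/-- `Φ` is a cutoff to frequencies of size at most of order `R`; the bounds are those needed to
compare `Φ(D) u` and `u - Φ(D) u` with `u`. -/
structure IsFrequencyCutoff (Φ : 𝓢(Esp N, ℂ)) (R : ℝ) : Prop where
  norm_le_one : ∀ ξ, ‖Φ ξ‖ ≤ 1
  norm_one_sub_le_one : ∀ ξ, ‖1 - Φ ξ‖ ≤ 1
  eq_one : ∀ ξ, ‖ξ‖ ≤ R → Φ ξ = 1

theorem norm_one_sub_unitCutoff_le_one (x : Esp N) : ‖1 - unitCutoff x‖ ≤ 1 := by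
  have hle := ContDiffBump.le_one (⟨1, 2, one_pos, one_lt_two⟩ : ContDiffBump (0 : Esp N)) (x := x)
  have hnonneg := ContDiffBump.nonneg
    (⟨1, 2, one_pos, one_lt_two⟩ : ContDiffBump (0 : Esp N)) (x := x)
  rw [unitCutoff, ← Complex.ofReal_one, ← Complex.ofReal_sub, Complex.norm_real,
    Real.norm_of_nonneg (by linarith)]
  linarith

theorem exists_isFrequencyCutoff (N : ℕ) (hR : 0 < R) :
    ∃ Φ : 𝓢(Esp N, ℂ), IsFrequencyCutoff Φ R := by
  have htest : TestFun fun ξ : Esp N => unitCutoff (R⁻¹ • ξ + 0) :=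
    testFun_unitCutoff.comp_smul_add (inv_ne_zero hR.ne') 0
  refine ⟨htest.2.toSchwartzMap htest.1, fun ξ => norm_unitCutoff_le_one _,
    fun ξ => norm_one_sub_unitCutoff_le_one _, fun ξ hξ => unitCutoff_eq_one ?_⟩
  rw [add_zero, norm_smul, Real.norm_of_nonneg (by positivity)]
  exact inv_mul_le_one_of_le₀ hξ hR.le

end FrequencyCutoff

theorem integral_sq_norm_le_of_fourierL2 {N : ℕ} {f g m : Esp N → ℂ} (hf : MemLp f 2 volume)
    (hg : MemLp g 2 volume) (hm : ∀ ξ, ‖m ξ‖ ≤ 1)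
    (h : fourierL2 hg =ᵐ[volume] fun ξ => m ξ * fourierL2 hf ξ) :
    ∫ x, ‖g x‖ ^ 2 ≤ ∫ x, ‖f x‖ ^ 2 := by
  rw [← integral_sq_norm_fourierL2 hf, ← integral_sq_norm_fourierL2 hg]
  refine integral_mono_ae (memLp_fourierL2 _).norm.integrable_sq
    (memLp_fourierL2 _).norm.integrable_sq ?_
  filter_upwards [h] with ξ hξ
  rw [hξ, norm_mul]
  gcongr
  exact mul_le_of_le_one_left (norm_nonneg _) (hm ξ)

theorem H2.isWeakPDeriv_lowPass {N : ℕ} (U : H2 N) (Φ : 𝓢(Esp N, ℂ)) (i : Fin N) :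
    IsWeakPDeriv (lowPass Φ U.u) i (lowPass Φ (U.grad i)) := by
  rw [isWeakPDeriv_iff_fourierL2 (memLp_lowPass Φ U.u_mem) (memLp_lowPass Φ (U.grad_mem i))]
  filter_upwards [fourierL2_lowPass Φ (U.grad_mem i), fourierL2_lowPass Φ U.u_mem,
    U.fourierL2_grad i] with ξ hgrad hu hspec
  rw [hgrad, hu, hspec, mul_left_comm]

namespace H2

variable {N : ℕ} {Φ : 𝓢(Esp N, ℂ)} {R : ℝ}

/-- The low-frequency part `Φ(D) u` as an element of `H²`. -/
def lowPass (U : H2 N) (Φ : 𝓢(Esp N, ℂ)) : H2 N where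
  u := _root_.lowPass Φ U.u
  grad := fun i => _root_.lowPass Φ (U.grad i)
  lapl := _root_.lowPass Φ U.lapl
  u_mem := memLp_lowPass Φ U.u_mem
  grad_mem := fun i => memLp_lowPass Φ (U.grad_mem i)
  lapl_mem := memLp_lowPass Φ U.lapl_mem
  grad_spec := U.isWeakPDeriv_lowPass Φ
  lapl_spec := by
    rw [isWeakLap_iff_fourierL2 (memLp_lowPass Φ U.u_mem)
      (fun i => memLp_lowPass Φ (U.grad_mem i)) (memLp_lowPass Φ U.lapl_mem)
      (U.isWeakPDeriv_lowPass Φ)]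
    filter_upwards [fourierL2_lowPass Φ U.lapl_mem, fourierL2_lowPass Φ U.u_mem,
      U.fourierL2_lapl] with ξ hlapl hu hspec
    rw [hlapl, hu, hspec, mul_left_comm]

variable (U : H2 N)

theorem massSq_lowPass_le (hΦ : IsFrequencyCutoff Φ R) : (U.lowPass Φ).massSq ≤ U.massSq :=
  integral_sq_norm_le_of_fourierL2 U.u_mem (memLp_lowPass Φ U.u_mem) hΦ.norm_le_one
    (fourierL2_lowPass Φ U.u_mem)

theorem lapSq_lowPass_le (hΦ : IsFrequencyCutoff Φ R) : (U.lowPass Φ).lapSq ≤ U.lapSq :=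
  integral_sq_norm_le_of_fourierL2 U.lapl_mem (memLp_lowPass Φ U.lapl_mem) hΦ.norm_le_one
    (fourierL2_lowPass Φ U.lapl_mem)

theorem lapSq_sub_lowPass_le (hΦ : IsFrequencyCutoff Φ R) :
    (U.sub (U.lowPass Φ)).lapSq ≤ U.lapSq :=
  integral_sq_norm_le_of_fourierL2 U.lapl_mem (U.lapl_mem.sub (memLp_lowPass Φ U.lapl_mem))
    hΦ.norm_one_sub_le_one (fourierL2_sub_lowPass Φ U.lapl_mem)

theorem massSq_sub_lowPass_le (hΦ : IsFrequencyCutoff Φ R) (hR : 0 < R) :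
    (U.sub (U.lowPass Φ)).massSq ≤ U.lapSq / R ^ 4 := by
  have hsub := U.u_mem.sub (memLp_lowPass Φ U.u_mem)
  have hmass : (U.sub (U.lowPass Φ)).massSq = ∫ ξ, ‖fourierL2 hsub ξ‖ ^ 2 :=
    (integral_sq_norm_fourierL2 hsub).symm
  rw [hmass, lapSq, ← integral_sq_norm_fourierL2 U.lapl_mem, ← integral_div]
  refine integral_mono_ae (memLp_fourierL2 _).norm.integrable_sq
    ((memLp_fourierL2 _).norm.integrable_sq.div_const _) ?_
  filter_upwards [fourierL2_sub_lowPass Φ U.u_mem, U.norm_fourierL2_lapl] with ξ hξ hlap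
  rw [hξ, hlap, norm_mul]
  rcases le_or_gt ‖ξ‖ R with hlow | hhigh
  · rw [hΦ.eq_one ξ hlow, sub_self, norm_zero, zero_mul, zero_pow two_ne_zero]
    positivity
  · have hπ : 1 ≤ 4 * Real.pi ^ 2 := by nlinarith [Real.pi_gt_three]
    rw [le_div_iff₀ (by positivity)]
    calc (‖1 - Φ ξ‖ * ‖fourierL2 U.u_mem ξ‖) ^ 2 * R ^ 4
        = (‖1 - Φ ξ‖ * R ^ 2 * ‖fourierL2 U.u_mem ξ‖) ^ 2 := by ring
      _ ≤ (4 * Real.pi ^ 2 * ‖ξ‖ ^ 2 * ‖fourierL2 U.u_mem ξ‖) ^ 2 := by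
        gcongr
        exact (hΦ.norm_one_sub_le_one ξ).trans hπ

theorem lowPass_translate_zero (Φ : 𝓢(Esp N, ℂ)) (x₀ : Esp N) :
    ((U.translate x₀).lowPass Φ).u 0 = (U.lowPass Φ).u x₀ := by
  change ∫ y, (𝓕 Φ : 𝓢(Esp N, ℂ)) (y - 0) * ((1 : ℝ) * U.u ((1 : ℝ) • y + x₀)) =
    ∫ y, (𝓕 Φ : 𝓢(Esp N, ℂ)) (y - x₀) * U.u y
  rw [← integral_add_right_eq_self (fun y => (𝓕 Φ : 𝓢(Esp N, ℂ)) (y - x₀) * U.u y) x₀]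
  simp

end H2

section BoundedFunctions

variable {α E : Type*} {mα : MeasurableSpace α} {μ : Measure α} [NormedAddCommGroup E] {f : α → E}
  {s C : ℝ}

theorem norm_rpow_add_two_le_of_bounded (hs : 0 ≤ s) (hC : ∀ x, ‖f x‖ ≤ C) (x : α) :
    ‖f x‖ ^ (s + 2) ≤ C ^ s * ‖f x‖ ^ 2 := by
  rw [Real.rpow_add_of_nonneg (norm_nonneg _) hs zero_le_two, Real.rpow_two]
  gcongr
  exact hC x

theorem integrable_norm_rpow_add_two_of_bounded (hs : 0 ≤ s) (hf : MemLp f 2 μ)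
    (hC : ∀ x, ‖f x‖ ≤ C) : Integrable (fun x => ‖f x‖ ^ (s + 2)) μ :=
  (hf.norm.integrable_sq.const_mul (C ^ s)).mono'
    (hf.1.norm.aemeasurable.pow_const _).aestronglyMeasurable (ae_of_all _ fun x => by
      rw [Real.norm_of_nonneg (by positivity)]
      exact norm_rpow_add_two_le_of_bounded hs hC x)

theorem integral_norm_rpow_add_two_le_of_bounded (hs : 0 ≤ s) (hf : MemLp f 2 μ)
    (hC : ∀ x, ‖f x‖ ≤ C) : ∫ x, ‖f x‖ ^ (s + 2) ∂μ ≤ C ^ s * ∫ x, ‖f x‖ ^ 2 ∂μ := by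
  rw [← integral_const_mul]
  exact integral_mono (integrable_norm_rpow_add_two_of_bounded hs hf hC)
    (hf.norm.integrable_sq.const_mul _) (norm_rpow_add_two_le_of_bounded hs hC)

end BoundedFunctions

section GagliardoNirenberg

variable {N : ℕ} {σ L M L' M' : ℝ}

theorem rLp_two {f : Esp N → ℂ} (hf : MemLp f 2 volume) : rLp 2 f = √(∫ x, ‖f x‖ ^ 2) := by
  rw [rLp, ENNReal.ofReal_ofNat, eLpNorm_two_eq_ofReal_sqrt hf,
    ENNReal.toReal_ofReal (Real.sqrt_nonneg _)]

/-- The right-hand side of the Gagliardo–Nirenberg inequality as a function of `L = ∫|Δu|²` and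
`M = ∫|u|²`. -/
def gnBound (N : ℕ) (σ L M : ℝ) : ℝ :=
  GNconst N σ * L ^ ((N : ℝ) * σ / 4) * M ^ (1 + σ - (N : ℝ) * σ / 4)

theorem gnBound_mono (hB : 0 ≤ GNconst N σ) (hσ : 0 ≤ σ) (hq : (N : ℝ) * σ ≤ 4 * (σ + 1))
    (hL : 0 ≤ L) (hM : 0 ≤ M) (hLL' : L ≤ L') (hMM' : M ≤ M') :
    gnBound N σ L M ≤ gnBound N σ L' M' := by
  have hL' : 0 ≤ L' := hL.trans hLL'
  have hexp : 0 ≤ 1 + σ - (N : ℝ) * σ / 4 := by linarith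
  unfold gnBound
  gcongr

theorem tendsto_gnBound_zero {ι : Type*} {l : Filter ι} {M : ι → ℝ}
    (hq : (N : ℝ) * σ < 4 * (σ + 1)) (L : ℝ) (hM : Tendsto M l (𝓝 0)) :
    Tendsto (fun i => gnBound N σ L (M i)) l (𝓝 0) := by
  have hexp : 0 < 1 + σ - (N : ℝ) * σ / 4 := by linarith
  simpa [gnBound, Real.zero_rpow hexp.ne'] using
    (hM.rpow_const (Or.inr hexp.le)).const_mul (GNconst N σ * L ^ ((N : ℝ) * σ / 4))

namespace H2

theorem pPow_eq_zero_of_not_nontriv (hσ : 0 < σ) {U : H2 N} (hU : ¬ U.Nontriv) :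
    U.pPow σ = 0 := by
  refine integral_eq_zero_of_ae ?_
  filter_upwards [not_not.1 hU] with x hx
  simp [hx, Real.zero_rpow (by positivity : 2 * σ + 2 ≠ 0)]

theorem pPow_le_gnBound (hN : 1 ≤ N) (hσ : 0 < σ) (hB : 0 < GNconst N σ) (U : H2 N) :
    U.pPow σ ≤ gnBound N σ U.lapSq U.massSq := by
  by_cases hU : U.Nontriv
  · -- `GNconst` is the supremum of a set of reals; it would be `0` were that set unbounded.
    have hbdd : BddAbove {r : ℝ | ∃ U : H2 N, U.Nontriv ∧ r = U.pPow σ /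
        (rLp 2 U.lapl ^ ((N : ℝ) * σ / 2) * rLp 2 U.u ^ (2 + 2 * σ - (N : ℝ) * σ / 2))} := by
      by_contra hunbdd
      exact hB.ne' (Real.sSup_of_not_bddAbove hunbdd)
    have hle := le_csSup hbdd ⟨U, hU, rfl⟩
    have hL : 0 < U.lapSq := U.lapSq_pos hN hU
    have hM : 0 < U.massSq := U.massSq_pos_iff.2 hU
    change _ ≤ GNconst N σ at hle
    rw [rLp_two U.lapl_mem, rLp_two U.u_mem] at hle
    change _ / (√U.lapSq ^ _ * √U.massSq ^ _) ≤ _ at hle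
    rw [← Real.rpow_div_two_eq_sqrt _ hL.le, ← Real.rpow_div_two_eq_sqrt _ hM.le,
      div_le_iff₀ (by positivity), ← mul_assoc] at hle
    have hexpL : (N : ℝ) * σ / 4 = N * σ / 2 / 2 := by ring
    have hexpM : 1 + σ - (N : ℝ) * σ / 4 = (2 + 2 * σ - N * σ / 2) / 2 := by ring
    rwa [gnBound, hexpM, hexpL]
  · rw [pPow_eq_zero_of_not_nontriv hσ hU, gnBound]
    have hL := U.lapSq_nonneg
    have hM := U.massSq_nonneg
    positivity

variable (U V : H2 N)

theorem tendsto_massSq_sub_lowPass {Φ : ℕ → 𝓢(Esp N, ℂ)}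
    (hΦ : ∀ n, IsFrequencyCutoff (Φ n) (n + 1)) :
    Tendsto (fun n => (U.sub (U.lowPass (Φ n))).massSq) atTop (𝓝 0) := by
  refine squeeze_zero (fun n => massSq_nonneg _)
    (fun n => U.massSq_sub_lowPass_le (hΦ n) n.cast_add_one_pos) ?_
  exact tendsto_const_nhds.div_atTop ((tendsto_pow_atTop four_ne_zero).comp
    (tendsto_atTop_add_const_right _ _ tendsto_natCast_atTop_atTop))

theorem memLp_of_integrable_norm_rpow (hσ : 0 < σ)
    (h : Integrable (fun x => ‖U.u x‖ ^ (2 * σ + 2)) volume) :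
    MemLp U.u (ENNReal.ofReal (2 * σ + 2)) volume := by
  have hp : 0 < 2 * σ + 2 := by positivity
  refine (integrable_norm_rpow_iff U.u_mem.1 (ENNReal.ofReal_pos.2 hp).ne'
    ENNReal.ofReal_ne_top).1 ?_
  rwa [ENNReal.toReal_ofReal hp.le]

theorem eLpNorm_eq_ofReal_pPow (hσ : 0 < σ) (h : MemLp U.u (ENNReal.ofReal (2 * σ + 2)) volume) :
    eLpNorm U.u (ENNReal.ofReal (2 * σ + 2)) volume =
      ENNReal.ofReal (U.pPow σ ^ (2 * σ + 2)⁻¹) := by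
  have hp : 0 < 2 * σ + 2 := by positivity
  rw [h.eLpNorm_eq_integral_rpow_norm (ENNReal.ofReal_pos.2 hp).ne' ENNReal.ofReal_ne_top,
    ENNReal.toReal_ofReal hp.le, pPow]

theorem memLp_lowPass_u (hσ : 0 < σ) (Φ : 𝓢(Esp N, ℂ)) :
    MemLp (U.lowPass Φ).u (ENNReal.ofReal (2 * σ + 2)) volume :=
  memLp_of_integrable_norm_rpow _ hσ (integrable_norm_rpow_add_two_of_bounded (by positivity)
    (U.lowPass Φ).u_mem (norm_lowPass_le Φ U.u_mem))

theorem memLp_u (hN : 1 ≤ N) (hσ : 0 < σ) (hq : (N : ℝ) * σ ≤ 4 * (σ + 1))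
    (hB : 0 < GNconst N σ) : MemLp U.u (ENNReal.ofReal (2 * σ + 2)) volume := by
  choose Φ hΦ using fun n : ℕ => exists_isFrequencyCutoff N (n.cast_add_one_pos (α := ℝ))
  have hinm : TendstoInMeasure volume (fun n => (U.lowPass (Φ n)).u) atTop U.u := by
    refine tendstoInMeasure_of_tendsto_eLpNorm two_ne_zero
      (fun n => (U.lowPass (Φ n)).u_mem.1) U.u_mem.1 ?_
    simp only [eLpNorm_sub_comm _ U.u]
    exact tendsto_eLpNorm_two_zero (fun n => (U.sub (U.lowPass (Φ n))).u_mem)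
      (U.tendsto_massSq_sub_lowPass hΦ)
  obtain ⟨ψ, -, hae⟩ := hinm.exists_seq_tendsto_ae
  have hbound (n : ℕ) : eLpNorm (U.lowPass (Φ n)).u (ENNReal.ofReal (2 * σ + 2)) volume ≤
      ENNReal.ofReal (gnBound N σ U.lapSq U.massSq ^ (2 * σ + 2)⁻¹) := by
    have hpow := ((U.lowPass (Φ n)).pPow_le_gnBound hN hσ hB).trans
      (gnBound_mono hB.le hσ.le hq (lapSq_nonneg _) (massSq_nonneg _)
        (U.lapSq_lowPass_le (hΦ n)) (U.massSq_lowPass_le (hΦ n)))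
    rw [eLpNorm_eq_ofReal_pPow _ hσ (U.memLp_lowPass_u hσ (Φ n))]
    exact ENNReal.ofReal_le_ofReal
      (Real.rpow_le_rpow (pPow_nonneg _ σ) hpow (by positivity))
  refine ⟨U.u_mem.1, ?_⟩
  calc eLpNorm U.u (ENNReal.ofReal (2 * σ + 2)) volume
      ≤ liminf (fun n => eLpNorm (U.lowPass (Φ (ψ n))).u (ENNReal.ofReal (2 * σ + 2)) volume)
        atTop := Lp.eLpNorm_lim_le_liminf_eLpNorm (fun n => (U.lowPass _).u_mem.1) _ hae
    _ ≤ ENNReal.ofReal (gnBound N σ U.lapSq U.massSq ^ (2 * σ + 2)⁻¹) :=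
      liminf_le_of_frequently_le' (Frequently.of_forall fun n => hbound (ψ n))
    _ < ⊤ := ENNReal.ofReal_lt_top

theorem integrable_norm_rpow (hN : 1 ≤ N) (hσ : 0 < σ) (hq : (N : ℝ) * σ ≤ 4 * (σ + 1))
    (hB : 0 < GNconst N σ) : Integrable (fun x => ‖U.u x‖ ^ (2 * σ + 2)) volume :=
  integrable_norm_rpow_of_memLp (by positivity) (U.memLp_u hN hσ hq hB)

theorem pPow_pos (hN : 1 ≤ N) (hσ : 0 < σ) (hq : (N : ℝ) * σ ≤ 4 * (σ + 1))
    (hB : 0 < GNconst N σ) (hU : U.Nontriv) : 0 < U.pPow σ := by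
  refine (U.pPow_nonneg σ).lt_of_ne' fun hzero => hU ?_
  have hae := (integral_eq_zero_iff_of_nonneg (fun x => by positivity)
    (U.integrable_norm_rpow hN hσ hq hB)).1 hzero
  filter_upwards [hae] with x hx
  simpa using (Real.rpow_eq_zero (norm_nonneg _) (by positivity)).1 hx

theorem pPow_le_add_sub (hN : 1 ≤ N) (hσ : 0 < σ) (hq : (N : ℝ) * σ ≤ 4 * (σ + 1))
    (hB : 0 < GNconst N σ) :
    U.pPow σ ≤ 2 ^ (2 * σ + 1) * (V.pPow σ + (U.sub V).pPow σ) := by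
  have hV := V.integrable_norm_rpow hN hσ hq hB
  have hUV := (U.sub V).integrable_norm_rpow hN hσ hq hB
  have hhalf : (1 / 2 : ℝ) ^ (1 - (2 * σ + 2)) = 2 ^ (2 * σ + 1) := by
    rw [one_div, Real.inv_rpow zero_le_two, ← Real.rpow_neg zero_le_two]
    ring_nf
  rw [pPow, pPow, pPow, ← integral_add hV hUV, ← integral_const_mul]
  refine integral_mono (U.integrable_norm_rpow hN hσ hq hB) ((hV.add hUV).const_mul _) fun x => ?_
  have htri : ‖U.u x‖ ≤ ‖V.u x‖ + ‖(U.sub V).u x‖ := norm_le_norm_add_norm_sub' _ _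
  have hconv := add_rpow_le_weighted (p := 2 * σ + 2) (θ := 1 / 2) (by linarith) (by norm_num)
    (by norm_num) (norm_nonneg (V.u x)) (norm_nonneg ((U.sub V).u x))
  rw [sub_half, ← mul_add, hhalf] at hconv
  exact (Real.rpow_le_rpow (norm_nonneg _) htri (by positivity)).trans hconv

theorem pPow_le_of_lowPass_le {C δ R : ℝ} {Φ : 𝓢(Esp N, ℂ)} (hN : 1 ≤ N) (hσ : 0 < σ)
    (hq : (N : ℝ) * σ ≤ 4 * (σ + 1)) (hB : 0 < GNconst N σ) (hΦ : IsFrequencyCutoff Φ R)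
    (hR : 0 < R) (hM : U.massSq ≤ C) (hL : U.lapSq ≤ C) (hδ₀ : 0 ≤ δ)
    (hδ : ∀ x, ‖(U.lowPass Φ).u x‖ ≤ δ) :
    U.pPow σ ≤ 2 ^ (2 * σ + 1) * (δ ^ (2 * σ) * C + gnBound N σ C (C / R ^ 4)) := by
  have hlow : (U.lowPass Φ).pPow σ ≤ δ ^ (2 * σ) * C :=
    (integral_norm_rpow_add_two_le_of_bounded (by positivity) (U.lowPass Φ).u_mem hδ).trans
      (mul_le_mul_of_nonneg_left ((U.massSq_lowPass_le hΦ).trans hM) (by positivity))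
  have hhigh : (U.sub (U.lowPass Φ)).pPow σ ≤ gnBound N σ C (C / R ^ 4) :=
    (pPow_le_gnBound hN hσ hB _).trans (gnBound_mono hB.le hσ.le hq (lapSq_nonneg _)
      (massSq_nonneg _) ((U.lapSq_sub_lowPass_le hΦ).trans hL)
      ((U.massSq_sub_lowPass_le hΦ hR).trans (by gcongr)))
  refine (U.pPow_le_add_sub (U.lowPass Φ) hN hσ hq hB).trans ?_
  gcongr

theorem exists_lt_norm_lowPass {C c : ℝ} (hN : 1 ≤ N) (hσ : 0 < σ)
    (hq : (N : ℝ) * σ < 4 * (σ + 1)) (hB : 0 < GNconst N σ) (hc : 0 < c) :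
    ∃ Φ : 𝓢(Esp N, ℂ), ∃ δ > 0, ∀ U : H2 N, U.massSq ≤ C → U.lapSq ≤ C → c ≤ U.pPow σ →
      ∃ x, δ < ‖(U.lowPass Φ).u x‖ := by
  have hc' : 0 < c / 2 ^ (2 * σ + 1) / 2 := by positivity
  have hhigh : Tendsto (fun R : ℝ => gnBound N σ C (C / R ^ 4)) atTop (𝓝 0) :=
    tendsto_gnBound_zero hq C (tendsto_const_nhds.div_atTop (tendsto_pow_atTop four_ne_zero))
  have hlow : Tendsto (fun δ : ℝ => δ ^ (2 * σ) * C) (𝓝[>] 0) (𝓝 0) := by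
    have hcont : Continuous fun δ : ℝ => δ ^ (2 * σ) * C :=
      (continuous_id.rpow_const fun _ => Or.inr (by positivity)).mul_const C
    simpa [Real.zero_rpow (by positivity : 2 * σ ≠ 0)] using
      (hcont.tendsto 0).mono_left nhdsWithin_le_nhds
  obtain ⟨R, hRlt, hR⟩ :=
    ((hhigh.eventually (eventually_lt_nhds hc')).and (eventually_gt_atTop 0)).exists
  obtain ⟨δ, hδlt, hδ⟩ :=
    ((hlow.eventually (eventually_lt_nhds hc')).and self_mem_nhdsWithin).exists
  obtain ⟨Φ, hΦ⟩ := exists_isFrequencyCutoff N hR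
  refine ⟨Φ, δ, hδ, fun U hM hL hP => ?_⟩
  by_contra! hsmall
  have hle := hP.trans (U.pPow_le_of_lowPass_le hN hσ hq.le hB hΦ hR hM hL (le_of_lt hδ) hsmall)
  rw [← div_le_iff₀' (by positivity)] at hle
  linarith

end H2

end GagliardoNirenberg

section MeasureLemmas

variable {α E : Type*} {mα : MeasurableSpace α} {μ : Measure α} [NormedAddCommGroup E] {f g : α → E}

theorem exists_isFiniteMeasure_le_absolutelyContinuous (μ : Measure α) [SigmaFinite μ] :
    ∃ ν : Measure α, IsFiniteMeasure ν ∧ ν ≤ μ ∧ μ ≪ ν := by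
  obtain ⟨k, hk, hkm, hk₁⟩ := exists_pos_lintegral_lt_of_sigmaFinite μ one_ne_zero
  have hle : (fun x => min (k x : ENNReal) 1) ≤ fun x => (k x : ENNReal) :=
    fun _ => min_le_left _ _
  refine ⟨μ.withDensity fun x => min (k x) 1,
    isFiniteMeasure_withDensity ((lintegral_mono hle).trans_lt (hk₁.trans ENNReal.one_lt_top)).ne,
    ?_, withDensity_absolutelyContinuous' (hkm.coe_nnreal_ennreal.min measurable_const).aemeasurable
      (ae_of_all _ fun x => by simpa using (hk x).ne')⟩
  calc μ.withDensity (fun x => min (k x : ENNReal) 1) ≤ μ.withDensity 1 :=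
        withDensity_mono (ae_of_all _ fun x => min_le_right _ _)
    _ = μ := withDensity_one

theorem integral_sq_norm_add_le (hf : MemLp f 2 μ) (hg : MemLp g 2 μ) :
    ∫ x, ‖f x + g x‖ ^ 2 ∂μ ≤ 2 * ((∫ x, ‖f x‖ ^ 2 ∂μ) + ∫ x, ‖g x‖ ^ 2 ∂μ) := by
  rw [← integral_add hf.norm.integrable_sq hg.norm.integrable_sq, ← integral_const_mul]
  exact integral_mono (hf.add hg).norm.integrable_sq
    ((hf.norm.integrable_sq.add hg.norm.integrable_sq).const_mul 2)
    fun x => (pow_le_pow_left₀ (norm_nonneg _) (norm_add_le _ _) 2).trans (add_sq_le)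

theorem integral_sq_norm_sub_le (hf : MemLp f 2 μ) (hg : MemLp g 2 μ) :
    ∫ x, ‖f x - g x‖ ^ 2 ∂μ ≤ 2 * ((∫ x, ‖f x‖ ^ 2 ∂μ) + ∫ x, ‖g x‖ ^ 2 ∂μ) := by
  simpa [sub_eq_add_neg] using integral_sq_norm_add_le hf hg.neg

end MeasureLemmas

section WeakConvergence

variable {N : ℕ} {f g : ℕ → Esp N → ℂ} {u v : Esp N → ℂ} {i : Fin N}

theorem IsWeakPDeriv.of_weakL2Tendsto (hfg : ∀ n, IsWeakPDeriv (f n) i (g n))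
    (hf : WeakL2Tendsto volume f u) (hg : WeakL2Tendsto volume g v) : IsWeakPDeriv u i v := by
  intro φ hφ
  have hu := hf _ ((hφ.pderivC i).memLp 2)
  have hv := (hg _ (hφ.memLp 2)).neg
  simp only [mul_comm (_root_.pderivC i φ _), mul_comm (φ _), hfg _ φ hφ] at hu hv
  exact tendsto_nhds_unique hu hv

theorem IsWeakLap.of_weakL2Tendsto (hfg : ∀ n, IsWeakLap (f n) (g n))
    (hf : WeakL2Tendsto volume f u) (hg : WeakL2Tendsto volume g v) : IsWeakLap u v := by
  intro φ hφ
  have hu := hf _ (hφ.lapC.memLp 2)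
  have hv := hg _ (hφ.memLp 2)
  simp only [mul_comm (_root_.lapC φ _), mul_comm (φ _), hfg _ φ hφ] at hu hv
  exact tendsto_nhds_unique hu hv

namespace H2

variable {w : ℕ → H2 N} {U : H2 N} {C : ℝ}

/-- Weak convergence in `H²`: weak `L²` convergence of the functions, of their gradients and of
their Laplacians. -/
structure WeakTendsto (w : ℕ → H2 N) (U : H2 N) : Prop where
  u : WeakL2Tendsto volume (fun n => (w n).u) U.u
  grad : ∀ i, WeakL2Tendsto volume (fun n => (w n).grad i) (U.grad i)
  lapl : WeakL2Tendsto volume (fun n => (w n).lapl) U.lapl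

theorem gradSq_le_of_massSq_le_of_lapSq_le (hM : U.massSq ≤ C) (hL : U.lapSq ≤ C) :
    U.gradSq ≤ C := by
  have hC : 0 ≤ C := U.massSq_nonneg.trans hM
  exact abs_le_of_sq_le_sq' (U.gradSq_sq_le.trans
    ((mul_le_mul hL hM U.massSq_nonneg hC).trans_eq (sq C).symm)) hC |>.2

theorem exists_subseq_weakTendsto (hM : ∀ n, (w n).massSq ≤ C) (hL : ∀ n, (w n).lapSq ≤ C) :
    ∃ ψ : ℕ → ℕ, StrictMono ψ ∧ ∃ U : H2 N, WeakTendsto (fun n => w (ψ n)) U := by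
  let parts : Option (Option (Fin N)) → ℕ → Esp N → ℂ := fun j n =>
    j.elim (w n).u fun j => j.elim (w n).lapl (w n).grad
  have hmem (j n) : MemLp (parts j n) 2 volume := by
    rcases j with _ | _ | i
    exacts [(w n).u_mem, (w n).lapl_mem, (w n).grad_mem i]
  have hbound (j n) : ∫ x, ‖parts j n x‖ ^ 2 ≤ C := by
    rcases j with _ | _ | i
    exacts [hM n, hL n, (integral_sq_norm_grad_le_gradSq (w n) i).trans
      (gradSq_le_of_massSq_le_of_lapSq_le (hM n) (hL n))]
  obtain ⟨ψ, hψ, hlim⟩ := exists_subseq_forall_weakL2Tendsto hmem hbound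
  choose G hG hw using hlim
  exact ⟨ψ, hψ, ⟨G none, fun i => G (some (some i)), G (some none), hG _, fun _ => hG _, hG _,
    fun i => .of_weakL2Tendsto (fun n => (w (ψ n)).grad_spec i) (hw none) (hw (some (some i))),
    .of_weakL2Tendsto (fun n => (w (ψ n)).lapl_spec) (hw none) (hw (some none))⟩,
    hw none, fun i => hw (some (some i)), hw (some none)⟩

variable {ν : Measure (Esp N)}

theorem integral_sq_norm_le_lowPass_add {Φ : 𝓢(Esp N, ℂ)} {R : ℝ} (hν : ν ≤ volume)
    (hΦ : IsFrequencyCutoff Φ R) (hR : 0 < R) (U : H2 N) :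
    ∫ x, ‖U.u x‖ ^ 2 ∂ν ≤ 2 * ((∫ x, ‖(U.lowPass Φ).u x‖ ^ 2 ∂ν) + U.lapSq / R ^ 4) := by
  have hlow := (U.lowPass Φ).u_mem
  have hhigh := (U.sub (U.lowPass Φ)).u_mem
  have hsplit := integral_sq_norm_add_le (hlow.mono_measure hν) (hhigh.mono_measure hν)
  have hmass : ∫ x, ‖(U.sub (U.lowPass Φ)).u x‖ ^ 2 ∂ν ≤ U.lapSq / R ^ 4 :=
    (integral_mono_measure hν (ae_of_all _ fun x => by positivity)
      hhigh.norm.integrable_sq).trans (U.massSq_sub_lowPass_le hΦ hR)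
  simp only [sub, add_sub_cancel] at hsplit hmass
  linarith

theorem tendsto_integral_sq_norm_lowPass [IsFiniteMeasure ν] (hM : ∀ n, (w n).massSq ≤ C)
    (hw : WeakL2Tendsto volume (fun n => (w n).u) 0) (Φ : 𝓢(Esp N, ℂ)) :
    Tendsto (fun n => ∫ x, ‖((w n).lowPass Φ).u x‖ ^ 2 ∂ν) atTop (𝓝 0) := by
  rw [← integral_zero (Esp N) ℝ (μ := ν)]
  refine tendsto_integral_of_dominated_convergence
    (fun _ => (√(∫ y, ‖(𝓕 Φ : 𝓢(Esp N, ℂ)) y‖ ^ 2) * √C) ^ 2) (fun n => ?_)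
    (integrable_const _) (fun n => ae_of_all _ fun x => ?_) (ae_of_all _ fun x => ?_)
  · exact ((continuous_lowPass Φ (w n).u_mem).norm.pow 2).aestronglyMeasurable
  · rw [Real.norm_of_nonneg (by positivity)]
    gcongr
    refine (norm_lowPass_le Φ (w n).u_mem x).trans ?_
    gcongr
    exact hM n
  · have hzero : _root_.lowPass Φ 0 x = 0 := by simp [_root_.lowPass]
    have hlim := (hw.lowPass Φ x).norm.pow 2
    rw [hzero, norm_zero, zero_pow two_ne_zero] at hlim
    exact hlim

-- High frequencies are uniformly small in `L²`, low frequencies converge pointwise.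
theorem tendsto_integral_sq_norm_of_weakL2Tendsto [IsFiniteMeasure ν] (hν : ν ≤ volume)
    (hM : ∀ n, (w n).massSq ≤ C) (hL : ∀ n, (w n).lapSq ≤ C)
    (hw : WeakL2Tendsto volume (fun n => (w n).u) 0) :
    Tendsto (fun n => ∫ x, ‖(w n).u x‖ ^ 2 ∂ν) atTop (𝓝 0) := by
  refine tendsto_order.2 ⟨fun a ha => Eventually.of_forall fun n =>
    ha.trans_le (integral_sq_norm_nonneg _ _), fun ε hε => ?_⟩
  have hhigh : Tendsto (fun R : ℝ => C / R ^ 4) atTop (𝓝 0) :=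
    tendsto_const_nhds.div_atTop (tendsto_pow_atTop four_ne_zero)
  obtain ⟨R, hRlt, hR⟩ := ((hhigh.eventually (eventually_lt_nhds (by positivity : 0 < ε / 4))).and
    (eventually_gt_atTop 0)).exists
  obtain ⟨Φ, hΦ⟩ := exists_isFrequencyCutoff N hR
  filter_upwards [(tendsto_integral_sq_norm_lowPass (ν := ν) hM hw Φ).eventually
    (eventually_lt_nhds (by positivity : 0 < ε / 4))] with n hn
  have hle := integral_sq_norm_le_lowPass_add hν hΦ hR (w n)
  have hLn : (w n).lapSq / R ^ 4 ≤ C / R ^ 4 := by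
    gcongr
    exact hL n
  linarith

theorem exists_subseq_ae_tendsto_zero (hM : ∀ n, (w n).massSq ≤ C) (hL : ∀ n, (w n).lapSq ≤ C)
    (hw : WeakL2Tendsto volume (fun n => (w n).u) 0) :
    ∃ ψ : ℕ → ℕ, StrictMono ψ ∧ ∀ᵐ x, Tendsto (fun n => (w (ψ n)).u x) atTop (𝓝 0) := by
  obtain ⟨ν, hfin, hν, hac⟩ :=
    exists_isFiniteMeasure_le_absolutelyContinuous (volume : Measure (Esp N))
  have hmem (n) : MemLp (w n).u 2 ν := (w n).u_mem.mono_measure hν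
  have hinm : TendstoInMeasure ν (fun n => (w n).u) atTop 0 := by
    refine tendstoInMeasure_of_tendsto_eLpNorm two_ne_zero (fun n => (hmem n).1)
      aestronglyMeasurable_zero ?_
    simpa using tendsto_eLpNorm_two_zero hmem
      (tendsto_integral_sq_norm_of_weakL2Tendsto hν hM hL hw)
  obtain ⟨ψ, hψ, hae⟩ := hinm.exists_seq_tendsto_ae
  exact ⟨ψ, hψ, hac.ae_le hae⟩

end H2

end WeakConvergence

section ProfileExtraction

namespace H2

variable {N : ℕ} {σ C : ℝ} {w : ℕ → H2 N} {U : H2 N}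

theorem massSq_sub_le (U V : H2 N) : (U.sub V).massSq ≤ 2 * (U.massSq + V.massSq) :=
  integral_sq_norm_sub_le U.u_mem V.u_mem

theorem lapSq_sub_le (U V : H2 N) : (U.sub V).lapSq ≤ 2 * (U.lapSq + V.lapSq) :=
  integral_sq_norm_sub_le U.lapl_mem V.lapl_mem

/-- Every functional entering the energy splits asymptotically into its value at `U` and its value
at the remainder `w n - U`. -/
structure AsymptoticSplitting (σ : ℝ) (w : ℕ → H2 N) (U : H2 N) : Prop where
  massSq : Tendsto (fun n => ((w n).sub U).massSq + U.massSq - (w n).massSq) atTop (𝓝 0)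
  gradSq : Tendsto (fun n => ((w n).sub U).gradSq + U.gradSq - (w n).gradSq) atTop (𝓝 0)
  lapSq : Tendsto (fun n => ((w n).sub U).lapSq + U.lapSq - (w n).lapSq) atTop (𝓝 0)
  pPow : Tendsto (fun n => ((w n).sub U).pPow σ + U.pPow σ - (w n).pPow σ) atTop (𝓝 0)

theorem AsymptoticSplitting.energy (h : AsymptoticSplitting σ w U) :
    Tendsto (fun n => ((w n).sub U).energy σ + U.energy σ - (w n).energy σ) atTop (𝓝 0) := by
  have hlim := (h.lapSq.sub (h.gradSq.const_mul 2)).sub (h.pPow.const_mul (1 / (σ + 1)))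
  simp only [mul_zero, sub_zero] at hlim
  refine hlim.congr fun n => ?_
  simp only [H2.energy]
  ring

theorem WeakTendsto.comp_strictMono (hw : WeakTendsto w U) {ψ : ℕ → ℕ} (hψ : StrictMono ψ) :
    WeakTendsto (fun n => w (ψ n)) U :=
  ⟨hw.u.comp_strictMono hψ, fun i => (hw.grad i).comp_strictMono hψ, hw.lapl.comp_strictMono hψ⟩

theorem WeakTendsto.tendsto_gradSq_split (hw : WeakTendsto w U) :
    Tendsto (fun n => ((w n).sub U).gradSq + U.gradSq - (w n).gradSq) atTop (𝓝 0) := by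
  have hsum := tendsto_finsetSum Finset.univ fun i _ =>
    (hw.grad i).tendsto_sq_norm_split (fun n => (w n).grad_mem i) (U.grad_mem i)
  simp only [Finset.sum_const_zero, Finset.sum_sub_distrib, Finset.sum_add_distrib] at hsum
  exact hsum

theorem WeakTendsto.tendsto_pPow_split (hN : 1 ≤ N) (hσ : 0 < σ)
    (hq : (N : ℝ) * σ ≤ 4 * (σ + 1)) (hB : 0 < GNconst N σ)
    (hM : ∀ n, ((w n).sub U).massSq ≤ C) (hL : ∀ n, ((w n).sub U).lapSq ≤ C)
    (hae : ∀ᵐ x, Tendsto (fun n => ((w n).sub U).u x) atTop (𝓝 0)) :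
    Tendsto (fun n => ((w n).sub U).pPow σ + U.pPow σ - (w n).pPow σ) atTop (𝓝 0) := by
  have hK (n) : ((w n).sub U).pPow σ ≤ gnBound N σ C C :=
    (pPow_le_gnBound hN hσ hB _).trans
      (gnBound_mono hB.le hσ.le hq (lapSq_nonneg _) (massSq_nonneg _) (hL n) (hM n))
  have hsplit := tendsto_brezisLieb (by linarith) (U.memLp_u hN hσ hq hB)
    (fun n => ((w n).sub U).memLp_u hN hσ hq hB) hK hae
  simp only [sub, add_sub_cancel] at hsplit
  exact hsplit

theorem WeakTendsto.exists_subseq_asymptoticSplitting (hN : 1 ≤ N) (hσ : 0 < σ)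
    (hq : (N : ℝ) * σ ≤ 4 * (σ + 1)) (hB : 0 < GNconst N σ) (hw : WeakTendsto w U)
    (hM : ∀ n, (w n).massSq ≤ C) (hL : ∀ n, (w n).lapSq ≤ C) :
    ∃ ψ : ℕ → ℕ, StrictMono ψ ∧ AsymptoticSplitting σ (fun n => w (ψ n)) U := by
  set K := 2 * (C + (U.massSq + U.lapSq))
  have hM' (n) : ((w n).sub U).massSq ≤ K := by
    linarith [massSq_sub_le (w n) U, hM n, U.lapSq_nonneg]
  have hL' (n) : ((w n).sub U).lapSq ≤ K := by
    linarith [lapSq_sub_le (w n) U, hL n, U.massSq_nonneg]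
  obtain ⟨ψ, hψ, hae⟩ := exists_subseq_ae_tendsto_zero hM' hL'
    (hw.u.sub_limit (fun n => (w n).u_mem) U.u_mem)
  have hwψ := hw.comp_strictMono hψ
  exact ⟨ψ, hψ, hwψ.u.tendsto_sq_norm_split (fun n => (w _).u_mem) U.u_mem,
    hwψ.tendsto_gradSq_split,
    hwψ.lapl.tendsto_sq_norm_split (fun n => (w _).lapl_mem) U.lapl_mem,
    tendsto_pPow_split hN hσ hq hB (fun n => hM' _) (fun n => hL' _) hae⟩

theorem WeakTendsto.nontriv_of_le_norm_lowPass {Φ : 𝓢(Esp N, ℂ)} {δ : ℝ} {x : Esp N} (hδ : 0 < δ)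
    (hw : WeakTendsto w U) (hle : ∀ n, δ ≤ ‖((w n).lowPass Φ).u x‖) : U.Nontriv := by
  intro htriv
  have hzero : _root_.lowPass Φ U.u x = 0 := by
    refine integral_eq_zero_of_ae ?_
    filter_upwards [htriv] with y hy
    simp [hy]
  have hlim := (hw.u.lowPass Φ x).norm
  rw [hzero, norm_zero] at hlim
  exact (ge_of_tendsto' hlim hle).not_gt hδ

theorem exists_nontriv_asymptoticSplitting_translate {c : ℝ} (hN : 1 ≤ N) (hσ : 0 < σ)
    (hq : (N : ℝ) * σ < 4 * (σ + 1)) (hB : 0 < GNconst N σ) (hc : 0 < c)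
    (hM : ∀ n, (w n).massSq ≤ C) (hL : ∀ n, (w n).lapSq ≤ C) (hP : ∀ n, c ≤ (w n).pPow σ) :
    ∃ (ψ : ℕ → ℕ) (xs : ℕ → Esp N) (U : H2 N), StrictMono ψ ∧ U.Nontriv ∧
      AsymptoticSplitting σ (fun k => (w (ψ k)).translate (xs k)) U := by
  obtain ⟨Φ, δ, hδ, hlarge⟩ := exists_lt_norm_lowPass (C := C) hN hσ hq hB hc
  choose xs hxs using fun n => hlarge (w n) (hM n) (hL n) (hP n)
  obtain ⟨ψ, hψ, U, hU⟩ := exists_subseq_weakTendsto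
    (fun n => ((w n).massSq_translate (xs n)).trans_le (hM n))
    (fun n => ((w n).lapSq_translate (xs n)).trans_le (hL n))
  have hnontriv : U.Nontriv := hU.nontriv_of_le_norm_lowPass (x := 0) hδ fun n => by
    rw [lowPass_translate_zero]
    exact (hxs (ψ n)).le
  obtain ⟨χ, hχ, hsplit⟩ := hU.exists_subseq_asymptoticSplitting hN hσ hq.le hB
    (fun n => ((w _).massSq_translate _).trans_le (hM _))
    (fun n => ((w _).lapSq_translate _).trans_le (hL _))
  exact ⟨ψ ∘ χ, fun k => xs (ψ (χ k)), U, hψ.comp hχ, hnontriv, hsplit⟩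

end H2

end ProfileExtraction

section Threshold

variable {N : ℕ} {σ m : ℝ}

theorem one_le_of_four_lt_mul (ha : 4 < (N : ℝ) * σ) : 1 ≤ N := by
  refine Nat.one_le_iff_ne_zero.2 ?_
  rintro rfl
  norm_num at ha

theorem pos_of_four_lt_mul (ha : 4 < (N : ℝ) * σ) : 0 < σ :=
  pos_of_mul_pos_right (four_pos.trans ha) N.cast_nonneg

/-- The coefficient `κ` of the potential term in `D(u) = ∫|Δu|² - κ ∫|u|^{2σ+2}`. -/
def virialCoeff (N : ℕ) (σ : ℝ) : ℝ :=
  (N : ℝ) * σ / (4 * (σ + 1)) * ((N : ℝ) * σ / 2 - 1)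

/-- The ratio `ρ = (Nσ-2)/(Nσ-4)`. Functions of mass less than `μ₀` with
`∫|Δu|² ≤ ρ² ∫|u|²` belong to the set `O`. -/
def criticalRatio (N : ℕ) (σ : ℝ) : ℝ := ((N : ℝ) * σ - 2) / ((N : ℝ) * σ - 4)

theorem virialCoeff_pos (ha : 4 < (N : ℝ) * σ) : 0 < virialCoeff N σ := by
  have hσ := pos_of_four_lt_mul ha
  exact mul_pos (div_pos (by linarith) (by positivity)) (by linarith)

theorem one_lt_criticalRatio (ha : 4 < (N : ℝ) * σ) : 1 < criticalRatio N σ := by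
  rw [criticalRatio, one_lt_div (by linarith)]
  linarith

theorem criticalRatio_pos (ha : 4 < (N : ℝ) * σ) : 0 < criticalRatio N σ :=
  one_pos.trans (one_lt_criticalRatio ha)

theorem one_sub_inv_criticalRatio (ha : 4 < (N : ℝ) * σ) :
    1 - (criticalRatio N σ)⁻¹ = 2 / ((N : ℝ) * σ - 2) := by
  have hne : (N : ℝ) * σ - 2 ≠ 0 := by linarith
  rw [criticalRatio, inv_div, one_sub_div hne]
  ring

theorem virialCoeff_mul_one_sub_inv_criticalRatio (ha : 4 < (N : ℝ) * σ) :
    virialCoeff N σ * (1 - (criticalRatio N σ)⁻¹) = (N : ℝ) * σ / 4 / (σ + 1) := by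
  have hσ := pos_of_four_lt_mul ha
  have hne : (N : ℝ) * σ - 2 ≠ 0 := by linarith
  rw [one_sub_inv_criticalRatio ha, virialCoeff]
  field_simp

theorem GNconst_nonneg (N : ℕ) (σ : ℝ) : 0 ≤ GNconst N σ := by
  refine Real.sSup_nonneg ?_
  rintro r ⟨U, -, rfl⟩
  have hP := U.pPow_nonneg σ
  unfold rLp
  positivity

theorem GNconst_pos_of_mu0_pos (hσ : 0 < σ) (hμ : 0 < mu0 N σ) : 0 < GNconst N σ := by
  refine (GNconst_nonneg N σ).lt_of_ne' fun hzero => hμ.ne' ?_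
  rw [mu0, hzero, Real.zero_rpow (by simp [hσ.ne']), zero_mul, zero_mul]

theorem mu0_rpow (ha : 4 < (N : ℝ) * σ) (hB : 0 < GNconst N σ) :
    mu0 N σ ^ σ =
      (virialCoeff N σ * GNconst N σ)⁻¹ * criticalRatio N σ ^ (2 - (N : ℝ) * σ / 2) := by
  have hσ := pos_of_four_lt_mul ha
  have hκ := virialCoeff_pos ha
  have hρ := criticalRatio_pos ha
  have hmu0 : mu0 N σ = (GNconst N σ ^ (-(1 / σ)) * virialCoeff N σ ^ (-(1 / σ))) *
    criticalRatio N σ ^ (2 / σ - (N : ℝ) / 2) := rfl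
  rw [hmu0, Real.mul_rpow (by positivity) (by positivity), ← Real.mul_rpow hB.le hκ.le,
    ← Real.rpow_mul (by positivity), ← Real.rpow_mul hρ.le, neg_mul,
    one_div_mul_cancel hσ.ne', Real.rpow_neg_one, mul_comm (GNconst N σ), sub_mul,
    div_mul_cancel₀ _ hσ.ne', div_mul_eq_mul_div]

theorem virialCoeff_mul_gnBound_lt (ha : 4 < (N : ℝ) * σ) (hm : 0 < m) (hμ : m < mu0 N σ) :
    virialCoeff N σ * gnBound N σ (criticalRatio N σ ^ 2 * m) m < criticalRatio N σ ^ 2 * m := by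
  have hσ := pos_of_four_lt_mul ha
  have hB := GNconst_pos_of_mu0_pos hσ (hm.trans hμ)
  have hκ := virialCoeff_pos ha
  have hρ := criticalRatio_pos ha
  have hmσ := Real.rpow_lt_rpow hm.le hμ hσ
  rw [mu0_rpow ha hB] at hmσ
  have hρpow : (criticalRatio N σ ^ 2) ^ ((N : ℝ) * σ / 4) =
      criticalRatio N σ ^ ((N : ℝ) * σ / 2) := by
    rw [← Real.rpow_natCast_mul hρ.le]
    push_cast
    ring_nf
  have hmpow : m ^ ((N : ℝ) * σ / 4) * m ^ (1 + σ - (N : ℝ) * σ / 4) = m ^ σ * m := by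
    rw [← Real.rpow_add hm, ← Real.rpow_add_one hm.ne']
    ring_nf
  calc virialCoeff N σ * gnBound N σ (criticalRatio N σ ^ 2 * m) m
      = virialCoeff N σ * GNconst N σ * criticalRatio N σ ^ ((N : ℝ) * σ / 2) * m *
          m ^ σ := by
        rw [gnBound, Real.mul_rpow (by positivity) hm.le, hρpow]
        linear_combination virialCoeff N σ * GNconst N σ *
          criticalRatio N σ ^ ((N : ℝ) * σ / 2) * hmpow
    _ < virialCoeff N σ * GNconst N σ * criticalRatio N σ ^ ((N : ℝ) * σ / 2) * m *
          ((virialCoeff N σ * GNconst N σ)⁻¹ * criticalRatio N σ ^ (2 - (N : ℝ) * σ / 2)) := by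
        gcongr
    _ = criticalRatio N σ ^ ((N : ℝ) * σ / 2) * criticalRatio N σ ^ (2 - (N : ℝ) * σ / 2) * m := by
        field_simp
    _ = criticalRatio N σ ^ 2 * m := by
        rw [← Real.rpow_add hρ, add_sub_cancel, Real.rpow_two]

theorem gnBound_mul_left {c L M : ℝ} (hc : 0 ≤ c) (hL : 0 ≤ L) :
    gnBound N σ (c * L) M = c ^ ((N : ℝ) * σ / 4) * gnBound N σ L M := by
  rw [gnBound, Real.mul_rpow hc hL, gnBound]
  ring

theorem Dfun_pos_of_lapSq_le {U : H2 N} (ha : 4 < (N : ℝ) * σ) (hq : (N : ℝ) * σ ≤ 4 * (σ + 1))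
    (hμ : m < mu0 N σ) (hU : U.Nontriv) (hM : U.massSq ≤ m)
    (hL : U.lapSq ≤ criticalRatio N σ ^ 2 * m) : 0 < Dfun σ U := by
  have hN := one_le_of_four_lt_mul ha
  have hσ := pos_of_four_lt_mul ha
  have hL₀ := U.lapSq_pos hN hU
  have hm : 0 < m := (U.massSq_pos_iff.2 hU).trans_le hM
  have hB := GNconst_pos_of_mu0_pos hσ (hm.trans hμ)
  have hκ := virialCoeff_pos ha
  have hX : 0 < criticalRatio N σ ^ 2 * m := hL₀.trans_le hL
  have hthreshold := virialCoeff_mul_gnBound_lt ha hm hμ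
  set X := criticalRatio N σ ^ 2 * m
  have hGN : U.pPow σ ≤ U.lapSq / X * gnBound N σ X m :=
    calc U.pPow σ ≤ gnBound N σ U.lapSq U.massSq := H2.pPow_le_gnBound hN hσ hB U
      _ ≤ gnBound N σ (U.lapSq / X * X) m :=
        gnBound_mono hB.le hσ.le hq hL₀.le U.massSq_nonneg (div_mul_cancel₀ _ hX.ne').ge hM
      _ = (U.lapSq / X) ^ ((N : ℝ) * σ / 4) * gnBound N σ X m :=
        gnBound_mul_left (by positivity) hX.le
      _ ≤ U.lapSq / X * gnBound N σ X m := by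
        have hgn : 0 ≤ gnBound N σ X m := by
          unfold gnBound
          positivity
        gcongr
        exact Real.rpow_le_self_of_le_one (by positivity) (div_le_one_of_le₀ hL hX.le)
          (by linarith)
  refine sub_pos.2 ?_
  calc virialCoeff N σ * U.pPow σ ≤ virialCoeff N σ * (U.lapSq / X * gnBound N σ X m) := by gcongr
    _ = U.lapSq / X * (virialCoeff N σ * gnBound N σ X m) := by ring
    _ < U.lapSq / X * X := by gcongr
    _ = U.lapSq := div_mul_cancel₀ _ hX.ne'

end Threshold

section Rescaling

namespace H2

variable {N : ℕ} {σ l t : ℝ}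

/-- The rescaled function `√l · u_t`, where `u_t(x) = t^{N/4} u(t^{1/2} x)`. -/
def rescale (U : H2 N) (l t : ℝ) (ht : 0 < t) : H2 N :=
  U.aff (√l * t ^ ((N : ℝ) / 4)) (√t) (Real.sqrt_pos.2 ht) 0

theorem sqrt_pow_eq_rpow_half (N : ℕ) (ht : 0 ≤ t) : √t ^ N = t ^ ((N : ℝ) / 2) := by
  rw [Real.sqrt_eq_rpow, ← Real.rpow_mul_natCast ht]
  ring_nf

theorem rescale_amplitude_sq (N : ℕ) (hl : 0 ≤ l) (ht : 0 < t) :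
    (√l * t ^ ((N : ℝ) / 4)) ^ 2 * (√t ^ N)⁻¹ = l := by
  have hpow : (t ^ ((N : ℝ) / 4)) ^ 2 = t ^ ((N : ℝ) / 2) := by
    rw [← Real.rpow_mul_natCast ht.le]
    push_cast
    ring_nf
  rw [mul_pow, Real.sq_sqrt hl, hpow, sqrt_pow_eq_rpow_half N ht.le,
    mul_inv_cancel_right₀ (Real.rpow_pos_of_pos ht _).ne']

theorem massSq_rescale (U : H2 N) (hl : 0 ≤ l) (ht : 0 < t) :
    (U.rescale l t ht).massSq = l * U.massSq := by
  rw [rescale, massSq_aff, rescale_amplitude_sq N hl ht]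

theorem lapSq_rescale (U : H2 N) (hl : 0 ≤ l) (ht : 0 < t) :
    (U.rescale l t ht).lapSq = l * (t ^ 2 * U.lapSq) := by
  rw [rescale, lapSq_aff, rescale_amplitude_sq N hl ht, sqrt_pow_eq_rpow_half 4 ht.le]
  norm_num
  ring

theorem gradSq_rescale (U : H2 N) (hl : 0 ≤ l) (ht : 0 < t) :
    (U.rescale l t ht).gradSq = l * (t * U.gradSq) := by
  rw [rescale, gradSq_aff, rescale_amplitude_sq N hl ht, Real.sq_sqrt ht.le, mul_assoc]

theorem pPow_rescale (U : H2 N) (hl : 0 ≤ l) (ht : 0 < t) :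
    (U.rescale l t ht).pPow σ = l ^ (σ + 1) * (t ^ ((N : ℝ) * σ / 2) * U.pPow σ) := by
  have hlpow : √l ^ (2 * σ + 2) = l ^ (σ + 1) := by
    rw [Real.sqrt_eq_rpow, ← Real.rpow_mul hl]
    ring_nf
  have htpow : (t ^ ((N : ℝ) / 4)) ^ (2 * σ + 2) =
      t ^ ((N : ℝ) * σ / 2) * t ^ ((N : ℝ) / 2) := by
    rw [← Real.rpow_mul ht.le, ← Real.rpow_add ht]
    ring_nf
  rw [rescale, pPow_aff, abs_of_nonneg (by positivity),
    Real.mul_rpow (by positivity) (by positivity), hlpow, htpow, sqrt_pow_eq_rpow_half N ht.le,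
    mul_assoc, mul_assoc, mul_assoc,
    mul_inv_cancel_left₀ (Real.rpow_pos_of_pos ht _).ne']

theorem energy_rescale (U : H2 N) (hl : 0 ≤ l) (ht : 0 < t) :
    (U.rescale l t ht).energy σ = l * phiFun σ U t -
      (l ^ (σ + 1) - l) * (t ^ ((N : ℝ) * σ / 2) * (U.pPow σ / (σ + 1))) := by
  rw [energy, phiFun, lapSq_rescale U hl ht, gradSq_rescale U hl ht, pPow_rescale U hl ht]
  ring

theorem Nontriv.rescale {U : H2 N} (hU : U.Nontriv) (hl : 0 < l) (ht : 0 < t) :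
    (U.rescale l t ht).Nontriv := by
  rw [← massSq_pos_iff] at hU ⊢
  rw [massSq_rescale U hl.le ht]
  positivity

end H2

theorem phiFun_one {N : ℕ} (σ : ℝ) (U : H2 N) : phiFun σ U 1 = U.energy σ := by
  simp [phiFun, H2.energy]

end Rescaling

section MemO

variable {N : ℕ} {σ : ℝ} {U : H2 N}

theorem virialCoeff_mul_pPow_mul_tInfl_rpow (ha : 4 < (N : ℝ) * σ) (hP : 0 < U.pPow σ) :
    virialCoeff N σ * U.pPow σ * tInfl σ U ^ ((N : ℝ) * σ / 2 - 2) = U.lapSq := by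
  have hσ := pos_of_four_lt_mul ha
  have hκ := virialCoeff_pos ha
  have hL := U.lapSq_nonneg
  have hNσ : (N : ℝ) * σ - 4 ≠ 0 := by linarith
  have hquot : 8 * (σ + 1) * U.lapSq / ((N : ℝ) * σ * ((N : ℝ) * σ - 2) * U.pPow σ) =
      U.lapSq / (virialCoeff N σ * U.pPow σ) := by
    have hNσ₂ : (N : ℝ) * σ - 2 ≠ 0 := by linarith
    have hNσ₀ : (N : ℝ) * σ ≠ 0 := by linarith
    rw [virialCoeff, div_eq_div_iff (mul_ne_zero (mul_ne_zero hNσ₀ hNσ₂) hP.ne') (by positivity)]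
    field_simp
    ring
  have hexp : 2 / ((N : ℝ) * σ - 4) * ((N : ℝ) * σ / 2 - 2) = 1 := by
    field_simp
    ring
  rw [tInfl, hquot, ← Real.rpow_mul (by positivity), hexp, Real.rpow_one,
    mul_div_cancel₀ _ (by positivity)]

theorem tInfl_pos (ha : 4 < (N : ℝ) * σ) (hL : 0 < U.lapSq) (hP : 0 < U.pPow σ) :
    0 < tInfl σ U := by
  have hσ := pos_of_four_lt_mul ha
  have hNσ : 0 < (N : ℝ) * σ - 2 := by linarith
  have hNσ₀ : 0 < (N : ℝ) * σ := by linarith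
  exact Real.rpow_pos_of_pos (div_pos (by positivity) (mul_pos (mul_pos hNσ₀ hNσ) hP)) _

theorem deriv_phiFun (σ : ℝ) (U : H2 N) {t : ℝ} (ht : 0 < t) :
    deriv (phiFun σ U) t = 2 * t * U.lapSq - 2 * U.gradSq -
      (N : ℝ) * σ / 2 * t ^ ((N : ℝ) * σ / 2 - 1) / (σ + 1) * U.pPow σ := by
  have hlap : HasDerivAt (fun t : ℝ => t ^ 2 * U.lapSq) (2 * t * U.lapSq) t := by
    simpa using (hasDerivAt_pow 2 t).mul_const U.lapSq
  have hgrad : HasDerivAt (fun t : ℝ => 2 * t * U.gradSq) (2 * U.gradSq) t := by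
    simpa using ((hasDerivAt_id t).const_mul 2).mul_const U.gradSq
  exact ((hlap.sub hgrad).sub (((Real.hasDerivAt_rpow_const (Or.inl ht.ne')).div_const
    (σ + 1)).mul_const (U.pPow σ))).deriv

theorem deriv_phiFun_tInfl (ha : 4 < (N : ℝ) * σ) (hL : 0 < U.lapSq) (hP : 0 < U.pPow σ) :
    deriv (phiFun σ U) (tInfl σ U) =
      2 * (tInfl σ U * U.lapSq / criticalRatio N σ - U.gradSq) := by
  have ht := tInfl_pos ha hL hP
  have hpow := virialCoeff_mul_pPow_mul_tInfl_rpow ha hP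
  have hcoeff := virialCoeff_mul_one_sub_inv_criticalRatio ha
  have hsucc : tInfl σ U ^ ((N : ℝ) * σ / 2 - 1) =
      tInfl σ U ^ ((N : ℝ) * σ / 2 - 2) * tInfl σ U := by
    rw [← Real.rpow_add_one ht.ne']
    ring_nf
  rw [deriv_phiFun σ U ht, hsucc, div_eq_mul_inv _ (criticalRatio N σ)]
  linear_combination -2 * (1 - (criticalRatio N σ)⁻¹) * tInfl σ U * hpow +
    2 * U.pPow σ * tInfl σ U ^ ((N : ℝ) * σ / 2 - 2) * tInfl σ U * hcoeff

-- `D` vanishes at `u_t` for `t = t_{u,infl}`, whereas it is positive where `∫|Δu|² ≤ ρ² ∫|u|²`.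
theorem mul_massSq_lt_sq_tInfl_mul_lapSq (ha : 4 < (N : ℝ) * σ)
    (hq : (N : ℝ) * σ ≤ 4 * (σ + 1)) (hU : U.Nontriv) (hμ : U.massSq < mu0 N σ)
    (hP : 0 < U.pPow σ) :
    criticalRatio N σ ^ 2 * U.massSq < tInfl σ U ^ 2 * U.lapSq := by
  by_contra! hle
  have ht := tInfl_pos ha (U.lapSq_pos (one_le_of_four_lt_mul ha) hU) hP
  have hD : 0 < Dfun σ (U.rescale 1 (tInfl σ U) ht) := by
    refine Dfun_pos_of_lapSq_le ha hq hμ (hU.rescale one_pos ht) ?_ ?_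
    · rw [U.massSq_rescale zero_le_one ht, one_mul]
    · rwa [U.lapSq_rescale zero_le_one ht, one_mul]
  have hpow := virialCoeff_mul_pPow_mul_tInfl_rpow ha hP
  have hsplit : tInfl σ U ^ ((N : ℝ) * σ / 2) =
      tInfl σ U ^ ((N : ℝ) * σ / 2 - 2) * tInfl σ U ^ 2 := by
    rw [← Real.rpow_two, ← Real.rpow_add ht, sub_add_cancel]
  rw [Dfun, ← virialCoeff, U.lapSq_rescale zero_le_one ht, U.pPow_rescale zero_le_one ht,
    Real.one_rpow, one_mul, one_mul, hsplit] at hD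
  exact hD.ne' (by linear_combination -tInfl σ U ^ 2 * hpow)

theorem memO_of_Dfun_pos (ha : 4 < (N : ℝ) * σ) (hq : (N : ℝ) * σ ≤ 4 * (σ + 1))
    (hU : U.Nontriv) (hμ : U.massSq < mu0 N σ) (hD : 0 < Dfun σ U) : memO σ U := by
  refine ⟨hU, hD, ?_⟩
  have hN := one_le_of_four_lt_mul ha
  have hσ := pos_of_four_lt_mul ha
  have hB := GNconst_pos_of_mu0_pos hσ (U.massSq_nonneg.trans_lt hμ)
  have hL := U.lapSq_pos hN hU
  have hP := U.pPow_pos hN hσ hq hB hU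
  have hρ := criticalRatio_pos ha
  have ht := tInfl_pos ha hL hP
  rw [deriv_phiFun_tInfl ha hL hP]
  suffices U.gradSq ^ 2 < (tInfl σ U * U.lapSq / criticalRatio N σ) ^ 2 by
    have hlt := lt_of_pow_lt_pow_left₀ 2 (by positivity) this
    linarith
  calc U.gradSq ^ 2 ≤ U.lapSq * U.massSq := U.gradSq_sq_le
    _ = U.lapSq * (criticalRatio N σ ^ 2 * U.massSq) / criticalRatio N σ ^ 2 := by field_simp
    _ < U.lapSq * (tInfl σ U ^ 2 * U.lapSq) / criticalRatio N σ ^ 2 := by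
      have hlt := mul_massSq_lt_sq_tInfl_mul_lapSq ha hq hU hμ hP
      gcongr
    _ = (tInfl σ U * U.lapSq / criticalRatio N σ) ^ 2 := by ring

theorem memO_of_lapSq_le {m : ℝ} (ha : 4 < (N : ℝ) * σ) (hq : (N : ℝ) * σ ≤ 4 * (σ + 1))
    (hμ : m < mu0 N σ) (hU : U.Nontriv) (hM : U.massSq ≤ m)
    (hL : U.lapSq ≤ criticalRatio N σ ^ 2 * m) : memO σ U :=
  memO_of_Dfun_pos ha hq hU (hM.trans_lt hμ) (Dfun_pos_of_lapSq_le ha hq hμ hU hM hL)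

end MemO

section EnergyEstimates

variable {N : ℕ} {σ m t : ℝ} {U : H2 N}

theorem mul_pPow_div_le_of_Dfun_pos (ha : 4 < (N : ℝ) * σ) (hD : 0 < Dfun σ U) :
    (N : ℝ) * σ / 4 * (U.pPow σ / (σ + 1)) ≤ (1 - (criticalRatio N σ)⁻¹) * U.lapSq := by
  have hgap : 0 < 1 - (criticalRatio N σ)⁻¹ :=
    sub_pos.2 (inv_lt_one_of_one_lt₀ (one_lt_criticalRatio ha))
  calc (N : ℝ) * σ / 4 * (U.pPow σ / (σ + 1))
      = (1 - (criticalRatio N σ)⁻¹) * (virialCoeff N σ * U.pPow σ) := by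
        linear_combination -U.pPow σ * virialCoeff_mul_one_sub_inv_criticalRatio ha
    _ ≤ (1 - (criticalRatio N σ)⁻¹) * U.lapSq := by
        gcongr
        exact (sub_pos.1 hD).le

theorem phiFun_add_le_energy (ha : 4 < (N : ℝ) * σ) (hD : 0 < Dfun σ U) (ht : 0 < t)
    (ht₁ : t ≤ 1) :
    phiFun σ U t + (1 - t) * ((1 + t) * U.lapSq / criticalRatio N σ - 2 * U.gradSq) ≤
      U.energy σ := by
  have hσ := pos_of_four_lt_mul ha
  have hpot : 0 ≤ U.pPow σ / (σ + 1) := div_nonneg (U.pPow_nonneg σ) (by positivity)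
  have hbern : 1 - t ^ ((N : ℝ) * σ / 2) ≤ (N : ℝ) * σ / 4 * (1 - t ^ 2) := by
    have hle := one_add_mul_self_le_rpow_one_add (s := t ^ 2 - 1) (p := (N : ℝ) * σ / 4)
      (by linarith [sq_nonneg t]) (by linarith)
    have hpow : (1 + (t ^ 2 - 1)) ^ ((N : ℝ) * σ / 4) = t ^ ((N : ℝ) * σ / 2) := by
      rw [add_sub_cancel, ← Real.rpow_natCast_mul ht.le]
      push_cast
      ring_nf
    linarith
  have hdrop : (1 - t ^ ((N : ℝ) * σ / 2)) * (U.pPow σ / (σ + 1)) ≤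
      (1 - t ^ 2) * ((1 - (criticalRatio N σ)⁻¹) * U.lapSq) :=
    calc (1 - t ^ ((N : ℝ) * σ / 2)) * (U.pPow σ / (σ + 1))
        ≤ (N : ℝ) * σ / 4 * (1 - t ^ 2) * (U.pPow σ / (σ + 1)) := by gcongr
      _ = (1 - t ^ 2) * ((N : ℝ) * σ / 4 * (U.pPow σ / (σ + 1))) := by ring
      _ ≤ (1 - t ^ 2) * ((1 - (criticalRatio N σ)⁻¹) * U.lapSq) :=
        mul_le_mul_of_nonneg_left (mul_pPow_div_le_of_Dfun_pos ha hD)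
          (sub_nonneg.2 (pow_le_one₀ ht.le ht₁))
  rw [phiFun, H2.energy]
  linear_combination hdrop

theorem lapSq_le_of_Dfun_pos (ha : 4 < (N : ℝ) * σ) (hD : 0 < Dfun σ U) :
    U.lapSq ≤ 2 * criticalRatio N σ * U.energy σ + 4 * criticalRatio N σ ^ 2 * U.massSq := by
  have hσ := pos_of_four_lt_mul ha
  have hρ := criticalRatio_pos ha
  have hpot : U.pPow σ / (σ + 1) ≤ (1 - (criticalRatio N σ)⁻¹) * U.lapSq :=
    (le_mul_of_one_le_left (div_nonneg (U.pPow_nonneg σ) (by positivity)) (by linarith)).trans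
      (mul_pPow_div_le_of_Dfun_pos ha hD)
  have hE : U.lapSq * (criticalRatio N σ)⁻¹ ≤ U.energy σ + 2 * (√U.lapSq * √U.massSq) := by
    rw [H2.energy]
    linear_combination hpot + 2 * U.gradSq_le_sqrt_mul_sqrt
  rw [← div_eq_mul_inv, div_le_iff₀ hρ] at hE
  have hsq := sq_nonneg (√U.lapSq - 2 * criticalRatio N σ * √U.massSq)
  linear_combination hsq + 2 * hE + Real.sq_sqrt U.lapSq_nonneg +
    4 * criticalRatio N σ ^ 2 * Real.sq_sqrt U.massSq_nonneg

theorem bddBelow_energy_memO (ha : 4 < (N : ℝ) * σ) (m : ℝ) :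
    BddBelow {r : ℝ | ∃ U : H2 N, memO σ U ∧ U.massSq = m ∧ r = U.energy σ} := by
  refine ⟨-(2 * criticalRatio N σ * m), ?_⟩
  rintro r ⟨U, hU, rfl, rfl⟩
  have hρ := criticalRatio_pos ha
  have hL := U.lapSq_nonneg.trans (lapSq_le_of_Dfun_pos ha hU.2.1)
  refine le_of_mul_le_mul_left ?_ (mul_pos two_pos hρ)
  linear_combination hL

theorem tildeE_massSq_le_energy (ha : 4 < (N : ℝ) * σ) (hU : memO σ U) :
    tildeE N σ U.massSq ≤ U.energy σ :=
  csInf_le (bddBelow_energy_memO ha _) ⟨U, hU, rfl, rfl⟩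

/-- The amount by which `‖Δu‖` exceeds `ρ ‖u‖`, the bound under which a function of mass less than
`μ₀` lies in `O`. -/
def H2.lapExcess (σ : ℝ) (U : H2 N) : ℝ :=
  max 0 (√U.lapSq - criticalRatio N σ * √U.massSq)

theorem H2.lapExcess_nonneg (σ : ℝ) (U : H2 N) : 0 ≤ U.lapExcess σ := le_max_left _ _

theorem H2.sqrt_lapSq_le (σ : ℝ) (U : H2 N) :
    √U.lapSq ≤ criticalRatio N σ * √U.massSq + U.lapExcess σ :=
  sub_le_iff_le_add'.1 (le_max_right _ _)

-- The dilation `t = ρ ‖u‖ / ‖Δu‖`, when less than `1`, brings `∫|Δu|²` down to `ρ² ∫|u|²`.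
theorem exists_phiFun_le_energy_sub (ha : 4 < (N : ℝ) * σ) (hU : U.Nontriv)
    (hD : 0 < Dfun σ U) :
    ∃ t, 0 < t ∧ t ≤ 1 ∧ t ^ 2 * U.lapSq ≤ criticalRatio N σ ^ 2 * U.massSq ∧
      phiFun σ U t ≤ U.energy σ - U.lapExcess σ ^ 2 / criticalRatio N σ := by
  have hρ := criticalRatio_pos ha
  have hx := Real.sqrt_pos.2 (U.lapSq_pos (one_le_of_four_lt_mul ha) hU)
  have hy := Real.sqrt_pos.2 (U.massSq_pos_iff.2 hU)
  have hgrad := U.gradSq_le_sqrt_mul_sqrt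
  have hL := Real.sq_sqrt U.lapSq_nonneg
  have hM := Real.sq_sqrt U.massSq_nonneg
  rw [H2.lapExcess]
  set x := √U.lapSq
  set y := √U.massSq
  rcases le_or_gt x (criticalRatio N σ * y) with hle | hlt
  · refine ⟨1, one_pos, le_rfl, ?_, ?_⟩
    · rw [← hL, ← hM, one_pow, one_mul, ← mul_pow]
      gcongr
    · simp [phiFun_one, max_eq_left (sub_nonpos.2 hle)]
  · have ht₁ : criticalRatio N σ * y / x ≤ 1 := (div_le_one hx).2 hlt.le
    refine ⟨criticalRatio N σ * y / x, by positivity, ht₁, ?_, ?_⟩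
    · rw [← hL, ← hM, div_pow, mul_pow, div_mul_cancel₀ _ (by positivity)]
    · rw [max_eq_right (sub_nonneg.2 hlt.le), le_sub_iff_add_le]
      refine le_trans (add_le_add_right ?_ _)
        (phiFun_add_le_energy ha hD (by positivity) ht₁)
      calc (x - criticalRatio N σ * y) ^ 2 / criticalRatio N σ
          = (1 - criticalRatio N σ * y / x) *
              ((1 + criticalRatio N σ * y / x) * U.lapSq / criticalRatio N σ - 2 * (x * y)) := by
            rw [← hL]
            field_simp
            ring
        _ ≤ (1 - criticalRatio N σ * y / x) *
              ((1 + criticalRatio N σ * y / x) * U.lapSq / criticalRatio N σ -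
                2 * U.gradSq) := by
            gcongr

theorem tildeE_le_phiFun (ha : 4 < (N : ℝ) * σ) (hq : (N : ℝ) * σ ≤ 4 * (σ + 1)) (hm : 0 < m)
    (hμ : m < mu0 N σ) (hU : U.Nontriv) (ht : 0 < t)
    (hle : t ^ 2 * U.lapSq ≤ criticalRatio N σ ^ 2 * U.massSq) :
    tildeE N σ m ≤ m / U.massSq * phiFun σ U t - ((m / U.massSq) ^ (σ + 1) - m / U.massSq) *
      (t ^ ((N : ℝ) * σ / 2) * (U.pPow σ / (σ + 1))) := by
  have hM := U.massSq_pos_iff.2 hU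
  have hl : 0 < m / U.massSq := by positivity
  have hmass : (U.rescale (m / U.massSq) t ht).massSq = m := by
    rw [U.massSq_rescale hl.le, div_mul_cancel₀ _ hM.ne']
  have hlap : (U.rescale (m / U.massSq) t ht).lapSq ≤ criticalRatio N σ ^ 2 * m :=
    calc (U.rescale (m / U.massSq) t ht).lapSq
        ≤ m / U.massSq * (criticalRatio N σ ^ 2 * U.massSq) := by
          rw [U.lapSq_rescale hl.le]
          gcongr
      _ = criticalRatio N σ ^ 2 * m := by field_simp
  rw [← U.energy_rescale hl.le ht]
  nth_rw 1 [← hmass]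
  exact tildeE_massSq_le_energy ha (memO_of_lapSq_le ha hq hμ (hU.rescale hl ht) hmass.le hlap)

-- Raising the mass from `∫|u|²` to `m` lowers the energy per unit mass, because `σ > 0`.
theorem massSq_div_mul_tildeE_lt (ha : 4 < (N : ℝ) * σ) (hq : (N : ℝ) * σ ≤ 4 * (σ + 1))
    (hm : 0 < m) (hμ : m < mu0 N σ) (hU : U.Nontriv) (hM : U.massSq < m)
    (hL : U.lapSq ≤ criticalRatio N σ ^ 2 * m) : U.massSq / m * tildeE N σ m < U.energy σ := by
  have hN := one_le_of_four_lt_mul ha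
  have hσ := pos_of_four_lt_mul ha
  have hρ := criticalRatio_pos ha
  have hM₀ := U.massSq_pos_iff.2 hU
  have hP := U.pPow_pos hN hσ hq (GNconst_pos_of_mu0_pos hσ (hm.trans hμ)) hU
  obtain ⟨t, ht, -, hle, hphi⟩ := exists_phiFun_le_energy_sub ha hU
    (Dfun_pos_of_lapSq_le ha hq hμ hU hM.le hL)
  have hexcess : 0 ≤ U.lapExcess σ ^ 2 / criticalRatio N σ := by positivity
  have hl : m / U.massSq < (m / U.massSq) ^ (σ + 1) :=
    Real.self_lt_rpow_of_one_lt ((one_lt_div hM₀).2 hM) (by linarith)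
  have hgain : 0 < ((m / U.massSq) ^ (σ + 1) - m / U.massSq) *
      (t ^ ((N : ℝ) * σ / 2) * (U.pPow σ / (σ + 1))) :=
    mul_pos (sub_pos.2 hl) (by positivity)
  calc U.massSq / m * tildeE N σ m < U.massSq / m * (m / U.massSq * phiFun σ U t) := by
        gcongr
        linarith [tildeE_le_phiFun ha hq hm hμ hU ht hle]
    _ = phiFun σ U t := by field_simp
    _ ≤ U.energy σ := by linarith

theorem massSq_div_mul_tildeE_le (ha : 4 < (N : ℝ) * σ) (hq : (N : ℝ) * σ ≤ 4 * (σ + 1))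
    (hm : 0 < m) (hμ : m < mu0 N σ) (hM : U.massSq ≤ m)
    (hL : U.lapSq ≤ criticalRatio N σ ^ 2 * m) : U.massSq / m * tildeE N σ m ≤ U.energy σ := by
  by_cases hU : U.Nontriv
  · rcases hM.lt_or_eq with hlt | rfl
    · exact (massSq_div_mul_tildeE_lt ha hq hm hμ hU hlt hL).le
    · rw [div_self hm.ne', one_mul]
      exact tildeE_massSq_le_energy ha (memO_of_lapSq_le ha hq hμ hU le_rfl hL)
  · have hmass : U.massSq = 0 :=
      le_antisymm (not_lt.1 fun h => hU (U.massSq_pos_iff.1 h)) U.massSq_nonneg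
    have hgrad : U.gradSq ≤ 0 := by simpa [hmass] using U.gradSq_le_sqrt_mul_sqrt
    rw [hmass, zero_div, zero_mul, H2.energy,
      H2.pPow_eq_zero_of_not_nontriv (pos_of_four_lt_mul ha) hU]
    linarith [U.lapSq_nonneg]

theorem mul_sq_lapExcess_le (ha : 4 < (N : ℝ) * σ) (hq : (N : ℝ) * σ ≤ 4 * (σ + 1))
    (hm : 0 < m) (hμ : m < mu0 N σ) (hU : memO σ U) :
    m / U.massSq * (U.lapExcess σ ^ 2 / criticalRatio N σ) ≤
      m / U.massSq * U.energy σ - tildeE N σ m +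
        |(m / U.massSq) ^ (σ + 1) - m / U.massSq| * (U.pPow σ / (σ + 1)) := by
  have hσ := pos_of_four_lt_mul ha
  obtain ⟨t, ht, ht₁, hle, hphi⟩ := exists_phiFun_le_energy_sub ha hU.1 hU.2.1
  have hM := U.massSq_pos_iff.2 hU.1
  have hpot : 0 ≤ U.pPow σ / (σ + 1) := div_nonneg (U.pPow_nonneg σ) (by positivity)
  have hl : 0 ≤ m / U.massSq := by positivity
  have hrescaled := tildeE_le_phiFun ha hq hm hμ hU.1 ht hle
  set l := m / U.massSq
  have herror : -(l ^ (σ + 1) - l) * (t ^ ((N : ℝ) * σ / 2) * (U.pPow σ / (σ + 1))) ≤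
      |l ^ (σ + 1) - l| * (U.pPow σ / (σ + 1)) := by
    gcongr
    · exact neg_le_abs _
    · exact mul_le_of_le_one_left hpot (Real.rpow_le_one ht.le ht₁ (by linarith))
  linear_combination hrescaled + herror + l * hphi

theorem neg_massSq_sub_energy_le (σ : ℝ) (U : H2 N) :
    -U.massSq - U.energy σ ≤ U.pPow σ / (σ + 1) := by
  have hsq := sq_nonneg (√U.lapSq - √U.massSq)
  rw [H2.energy]
  linear_combination hsq + 2 * U.gradSq_le_sqrt_mul_sqrt + Real.sq_sqrt U.lapSq_nonneg +
    Real.sq_sqrt U.massSq_nonneg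

end EnergyEstimates

section MinimizingSequences

variable {N : ℕ} {σ m : ℝ} {u : ℕ → H2 N} {U : H2 N}

/-- A minimizing sequence for `Ẽ_min(m)`. Its masses are only required to converge to `m`. -/
structure IsMinimizingSeq (σ m : ℝ) (u : ℕ → H2 N) : Prop where
  mem : ∀ n, memO σ (u n)
  massSq : Tendsto (fun n => (u n).massSq) atTop (𝓝 m)
  energy : Tendsto (fun n => (u n).energy σ) atTop (𝓝 (tildeE N σ m))

theorem IsMinimizingSeq.comp_strictMono (hu : IsMinimizingSeq σ m u) {ψ : ℕ → ℕ}
    (hψ : StrictMono ψ) : IsMinimizingSeq σ m (fun k => u (ψ k)) :=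
  ⟨fun k => hu.mem (ψ k), hu.massSq.comp hψ.tendsto_atTop, hu.energy.comp hψ.tendsto_atTop⟩

theorem memO.translate (hU : memO σ U) (x₀ : Esp N) : memO σ (U.translate x₀) := by
  have hphi : phiFun σ (U.translate x₀) = phiFun σ U := by
    ext t
    simp [phiFun]
  obtain ⟨hne, hD, hderiv⟩ := hU
  refine ⟨?_, ?_, ?_⟩
  · rwa [← H2.massSq_pos_iff, H2.massSq_translate, H2.massSq_pos_iff]
  · simpa [Dfun] using hD
  · simpa [hphi, tInfl] using hderiv

theorem IsMinimizingSeq.translate (hu : IsMinimizingSeq σ m u) (xs : ℕ → Esp N) :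
    IsMinimizingSeq σ m (fun k => (u k).translate (xs k)) :=
  ⟨fun k => (hu.mem k).translate (xs k), by simpa using hu.massSq,
    by simpa [H2.energy] using hu.energy⟩

theorem exists_isMinimizingSeq (ha : 4 < (N : ℝ) * σ) (hlt : tildeE N σ m < 0) :
    ∃ u : ℕ → H2 N, IsMinimizingSeq σ m u := by
  have hne : {r : ℝ | ∃ U : H2 N, memO σ U ∧ U.massSq = m ∧ r = U.energy σ}.Nonempty := by
    -- The infimum of the empty set of reals is `0`.
    by_contra! hempty
    rw [tildeE, hempty, Real.sInf_empty] at hlt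
    exact hlt.false
  obtain ⟨r, -, hr, hmem⟩ := exists_seq_tendsto_sInf hne (bddBelow_energy_memO ha m)
  choose u hu hmass henergy using hmem
  exact ⟨u, hu, by simp only [hmass, tendsto_const_nhds], hr.congr henergy⟩

theorem IsMinimizingSeq.exists_bound (hu : IsMinimizingSeq σ m u) (ha : 4 < (N : ℝ) * σ) :
    ∃ C, ∀ n, (u n).massSq ≤ C ∧ (u n).lapSq ≤ C := by
  obtain ⟨A, hA⟩ := hu.massSq.bddAbove_range
  obtain ⟨B, hB⟩ := ((hu.energy.const_mul (2 * criticalRatio N σ)).add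
    (hu.massSq.const_mul (4 * criticalRatio N σ ^ 2))).bddAbove_range
  exact ⟨max A B, fun n => ⟨(hA ⟨n, rfl⟩).trans (le_max_left _ _),
    (lapSq_le_of_Dfun_pos ha (hu.mem n).2.1).trans ((hB ⟨n, rfl⟩).trans (le_max_right _ _))⟩⟩

theorem IsMinimizingSeq.exists_pPow_le (hu : IsMinimizingSeq σ m u) (ha : 4 < (N : ℝ) * σ)
    (hq : (N : ℝ) * σ ≤ 4 * (σ + 1)) (hμ : 0 < mu0 N σ) : ∃ K, ∀ n, (u n).pPow σ ≤ K := by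
  have hσ := pos_of_four_lt_mul ha
  have hB := GNconst_pos_of_mu0_pos hσ hμ
  obtain ⟨C, hC⟩ := hu.exists_bound ha
  exact ⟨gnBound N σ C C, fun n => (H2.pPow_le_gnBound (one_le_of_four_lt_mul ha) hσ hB _).trans
    (gnBound_mono hB.le hσ.le hq (u n).lapSq_nonneg (u n).massSq_nonneg (hC n).2 (hC n).1)⟩

theorem IsMinimizingSeq.tendsto_lapExcess (hu : IsMinimizingSeq σ m u) (ha : 4 < (N : ℝ) * σ)
    (hq : (N : ℝ) * σ ≤ 4 * (σ + 1)) (hm : 0 < m) (hμ : m < mu0 N σ) :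
    Tendsto (fun n => (u n).lapExcess σ) atTop (𝓝 0) := by
  have hσ := pos_of_four_lt_mul ha
  have hρ := criticalRatio_pos ha
  obtain ⟨K, hK⟩ := hu.exists_pPow_le ha hq (hm.trans hμ)
  have hl : Tendsto (fun n => m / (u n).massSq) atTop (𝓝 1) := by
    simpa only [← div_eq_mul_inv, div_self hm.ne'] using
      (hu.massSq.inv₀ hm.ne').const_mul m
  have hl₀ (n) : 0 < m / (u n).massSq := div_pos hm ((u n).massSq_pos_iff.2 (hu.mem n).1)
  have hbound : Tendsto (fun n => m / (u n).massSq * (u n).energy σ - tildeE N σ m +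
      |(m / (u n).massSq) ^ (σ + 1) - m / (u n).massSq| * (K / (σ + 1)))
      atTop (𝓝 0) := by
    simpa using ((hl.mul hu.energy).sub_const (tildeE N σ m)).add
      (((hl.rpow_const (p := σ + 1) (Or.inl one_ne_zero)).sub hl).abs.mul_const
        (K / (σ + 1)))
  have hscaled : Tendsto (fun n => m / (u n).massSq * ((u n).lapExcess σ ^ 2 /
      criticalRatio N σ)) atTop (𝓝 0) := by
    refine squeeze_zero (fun n => mul_nonneg (hl₀ n).le (by positivity)) (fun n => ?_) hbound
    refine (mul_sq_lapExcess_le ha hq hm hμ (hu.mem n)).trans ?_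
    gcongr
    exact hK n
  have hsq : Tendsto (fun n => (u n).lapExcess σ ^ 2) atTop (𝓝 0) := by
    have hquot := (hscaled.div hl one_ne_zero).mul_const (criticalRatio N σ)
    rw [zero_div, zero_mul] at hquot
    refine hquot.congr fun n => ?_
    rw [Pi.div_apply, mul_div_cancel_left₀ _ (hl₀ n).ne', div_mul_cancel₀ _ hρ.ne']
  simpa [Real.sqrt_sq (H2.lapExcess_nonneg σ _)] using hsq.sqrt

theorem IsMinimizingSeq.exists_tendsto_lapSq_le (hu : IsMinimizingSeq σ m u)
    (ha : 4 < (N : ℝ) * σ) (hq : (N : ℝ) * σ ≤ 4 * (σ + 1)) (hm : 0 < m) (hμ : m < mu0 N σ) :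
    ∃ b : ℕ → ℝ, Tendsto b atTop (𝓝 (criticalRatio N σ ^ 2 * m)) ∧
      ∀ n, (u n).lapSq ≤ b n := by
  refine ⟨fun n => (criticalRatio N σ * √(u n).massSq + (u n).lapExcess σ) ^ 2, ?_,
    fun n => (Real.sqrt_le_iff.1 ((u n).sqrt_lapSq_le σ)).2⟩
  simpa [mul_pow, Real.sq_sqrt hm.le] using
    ((hu.massSq.sqrt.const_mul (criticalRatio N σ)).add
      (hu.tendsto_lapExcess ha hq hm hμ)).pow 2

theorem IsMinimizingSeq.exists_eventually_le_pPow (hu : IsMinimizingSeq σ m u) (hσ : 0 < σ)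
    (hlt : tildeE N σ m < -m) : ∃ c > 0, ∀ᶠ n in atTop, c ≤ (u n).pPow σ := by
  have hgap : 0 < -m - tildeE N σ m := by linarith
  refine ⟨(-m - tildeE N σ m) / 2 * (σ + 1), by positivity, ?_⟩
  filter_upwards [(hu.massSq.neg.sub hu.energy).eventually_const_lt (half_lt_self hgap)]
    with n hn
  exact (le_div_iff₀ (by positivity)).1 (hn.le.trans (neg_massSq_sub_energy_le σ (u n)))

theorem IsMinimizingSeq.exists_nontriv_asymptoticSplitting (hu : IsMinimizingSeq σ m u)
    (ha : 4 < (N : ℝ) * σ) (hq : (N : ℝ) * σ < 4 * (σ + 1)) (hm : 0 < m) (hμ : m < mu0 N σ)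
    (hlt : tildeE N σ m < -m) :
    ∃ (ψ : ℕ → ℕ) (xs : ℕ → Esp N) (U : H2 N), StrictMono ψ ∧ U.Nontriv ∧
      IsMinimizingSeq σ m (fun k => (u (ψ k)).translate (xs k)) ∧
      H2.AsymptoticSplitting σ (fun k => (u (ψ k)).translate (xs k)) U := by
  have hσ := pos_of_four_lt_mul ha
  obtain ⟨C, hC⟩ := hu.exists_bound ha
  obtain ⟨c, hc, hP⟩ := hu.exists_eventually_le_pPow hσ hlt
  obtain ⟨n₀, hn₀⟩ := eventually_atTop.1 hP
  obtain ⟨ψ, xs, U, hψ, hU, hsplit⟩ := H2.exists_nontriv_asymptoticSplitting_translate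
    (one_le_of_four_lt_mul ha) hσ hq (GNconst_pos_of_mu0_pos hσ (hm.trans hμ)) hc
    (w := fun n => u (n + n₀)) (fun n => (hC _).1) (fun n => (hC _).2)
    (fun n => hn₀ _ (Nat.le_add_left _ _))
  have hshift : StrictMono fun k => ψ k + n₀ := hψ.add_const n₀
  exact ⟨fun k => ψ k + n₀, xs, U, hshift, hU, (hu.comp_strictMono hshift).translate xs, hsplit⟩

end MinimizingSequences

section Compactness

variable {N : ℕ} {σ m C : ℝ} {v w : ℕ → H2 N} {U : H2 N}

theorem tendsto_of_tendsto_add_sub {ι : Type*} {l : Filter ι} {a b : ι → ℝ} {c d : ℝ}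
    (h : Tendsto (fun i => a i + c - b i) l (𝓝 0)) (hb : Tendsto b l (𝓝 d)) :
    Tendsto a l (𝓝 (d - c)) := by
  simpa using (h.add hb).sub_const c

theorem H2.tendsto_gradSq_zero (hM : Tendsto (fun n => (v n).massSq) atTop (𝓝 0))
    (hL : ∀ᶠ n in atTop, (v n).lapSq ≤ C) :
    Tendsto (fun n => (v n).gradSq) atTop (𝓝 0) := by
  have hbound : Tendsto (fun n => √C * √(v n).massSq) atTop (𝓝 0) := by
    simpa using hM.sqrt.const_mul (√C)
  refine squeeze_zero' (.of_forall fun n => (v n).gradSq_nonneg) ?_ hbound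
  filter_upwards [hL] with n hn
  refine (v n).gradSq_le_sqrt_mul_sqrt.trans ?_
  gcongr

theorem H2.tendsto_pPow_zero (hN : 1 ≤ N) (hσ : 0 < σ) (hq : (N : ℝ) * σ < 4 * (σ + 1))
    (hB : 0 < GNconst N σ) (hM : Tendsto (fun n => (v n).massSq) atTop (𝓝 0))
    (hL : ∀ᶠ n in atTop, (v n).lapSq ≤ C) :
    Tendsto (fun n => (v n).pPow σ) atTop (𝓝 0) := by
  refine squeeze_zero' (.of_forall fun n => (v n).pPow_nonneg σ) ?_
    (tendsto_gnBound_zero hq C hM)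
  filter_upwards [hL] with n hn
  exact (pPow_le_gnBound hN hσ hB (v n)).trans (gnBound_mono hB.le hσ.le hq.le
    (v n).lapSq_nonneg (v n).massSq_nonneg hn le_rfl)

namespace IsMinimizingSeq

theorem tendsto_massSq_sub (hw : IsMinimizingSeq σ m w) (hsplit : H2.AsymptoticSplitting σ w U) :
    Tendsto (fun n => ((w n).sub U).massSq) atTop (𝓝 (m - U.massSq)) :=
  tendsto_of_tendsto_add_sub hsplit.massSq hw.massSq

theorem tendsto_energy_sub (hw : IsMinimizingSeq σ m w) (hsplit : H2.AsymptoticSplitting σ w U) :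
    Tendsto (fun n => ((w n).sub U).energy σ) atTop (𝓝 (tildeE N σ m - U.energy σ)) :=
  tendsto_of_tendsto_add_sub hsplit.energy hw.energy

theorem massSq_le (hw : IsMinimizingSeq σ m w) (hsplit : H2.AsymptoticSplitting σ w U) :
    U.massSq ≤ m :=
  sub_nonneg.1 (ge_of_tendsto' (hw.tendsto_massSq_sub hsplit) fun _ => H2.massSq_nonneg _)

theorem exists_tendsto_lapSq_sub_le (hw : IsMinimizingSeq σ m w)
    (hsplit : H2.AsymptoticSplitting σ w U) (ha : 4 < (N : ℝ) * σ)
    (hq : (N : ℝ) * σ ≤ 4 * (σ + 1)) (hm : 0 < m) (hμ : m < mu0 N σ) :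
    ∃ b : ℕ → ℝ, Tendsto b atTop (𝓝 (criticalRatio N σ ^ 2 * m - U.lapSq)) ∧
      ∀ n, ((w n).sub U).lapSq ≤ b n := by
  obtain ⟨b, hb, hle⟩ := hw.exists_tendsto_lapSq_le ha hq hm hμ
  refine ⟨fun n => ((w n).sub U).lapSq + U.lapSq - (w n).lapSq + b n - U.lapSq, ?_,
    fun n => by linarith [hle n]⟩
  simpa only [zero_add] using (hsplit.lapSq.add hb).sub_const U.lapSq

theorem lapSq_le (hw : IsMinimizingSeq σ m w) (hsplit : H2.AsymptoticSplitting σ w U)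
    (ha : 4 < (N : ℝ) * σ) (hq : (N : ℝ) * σ ≤ 4 * (σ + 1)) (hm : 0 < m) (hμ : m < mu0 N σ) :
    U.lapSq ≤ criticalRatio N σ ^ 2 * m := by
  obtain ⟨b, hb, hle⟩ := hw.exists_tendsto_lapSq_sub_le hsplit ha hq hm hμ
  exact sub_nonneg.1 (ge_of_tendsto' hb fun n => (H2.lapSq_nonneg _).trans (hle n))

theorem eventually_lapSq_sub_le (hw : IsMinimizingSeq σ m w)
    (hsplit : H2.AsymptoticSplitting σ w U) (ha : 4 < (N : ℝ) * σ)
    (hq : (N : ℝ) * σ ≤ 4 * (σ + 1)) (hm : 0 < m) (hμ : m < mu0 N σ) (hU : U.Nontriv) :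
    ∀ᶠ n in atTop, ((w n).sub U).lapSq ≤ criticalRatio N σ ^ 2 * m := by
  obtain ⟨b, hb, hle⟩ := hw.exists_tendsto_lapSq_sub_le hsplit ha hq hm hμ
  have hL := U.lapSq_pos (one_le_of_four_lt_mul ha) hU
  filter_upwards [hb.eventually_le_const (sub_lt_self _ hL)] with n hn using (hle n).trans hn

theorem massSq_eq (hw : IsMinimizingSeq σ m w) (hsplit : H2.AsymptoticSplitting σ w U)
    (ha : 4 < (N : ℝ) * σ) (hq : (N : ℝ) * σ ≤ 4 * (σ + 1)) (hm : 0 < m) (hμ : m < mu0 N σ)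
    (hU : U.Nontriv) : U.massSq = m := by
  refine (hw.massSq_le hsplit).eq_of_not_lt fun hlt => ?_
  have hU_energy := massSq_div_mul_tildeE_lt ha hq hm hμ hU hlt
    (hw.lapSq_le hsplit ha hq hm hμ)
  have hM := U.massSq_pos_iff.2 hU
  have hmass := hw.tendsto_massSq_sub hsplit
  have hsub_energy : (m - U.massSq) / m * tildeE N σ m ≤ tildeE N σ m - U.energy σ := by
    refine le_of_tendsto_of_tendsto ((hmass.div_const m).mul_const _)
      (hw.tendsto_energy_sub hsplit) ?_
    filter_upwards [hmass.eventually_le_const (sub_lt_self _ hM),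
      hw.eventually_lapSq_sub_le hsplit ha hq hm hμ hU] with n hMn hLn
    exact massSq_div_mul_tildeE_le ha hq hm hμ hMn hLn
  rw [sub_div, div_self hm.ne', sub_mul, one_mul] at hsub_energy
  linarith

theorem memO_of_asymptoticSplitting (hw : IsMinimizingSeq σ m w)
    (hsplit : H2.AsymptoticSplitting σ w U) (ha : 4 < (N : ℝ) * σ)
    (hq : (N : ℝ) * σ ≤ 4 * (σ + 1)) (hm : 0 < m) (hμ : m < mu0 N σ) (hU : U.Nontriv) :
    memO σ U :=
  memO_of_lapSq_le ha hq hμ hU (hw.massSq_le hsplit) (hw.lapSq_le hsplit ha hq hm hμ)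

theorem tendsto_massSq_sub_zero (hw : IsMinimizingSeq σ m w)
    (hsplit : H2.AsymptoticSplitting σ w U) (ha : 4 < (N : ℝ) * σ)
    (hq : (N : ℝ) * σ ≤ 4 * (σ + 1)) (hm : 0 < m) (hμ : m < mu0 N σ) (hU : U.Nontriv) :
    Tendsto (fun n => ((w n).sub U).massSq) atTop (𝓝 0) := by
  simpa only [hw.massSq_eq hsplit ha hq hm hμ hU, sub_self] using hw.tendsto_massSq_sub hsplit

theorem tendsto_gradSq_sub_zero (hw : IsMinimizingSeq σ m w)
    (hsplit : H2.AsymptoticSplitting σ w U) (ha : 4 < (N : ℝ) * σ)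
    (hq : (N : ℝ) * σ ≤ 4 * (σ + 1)) (hm : 0 < m) (hμ : m < mu0 N σ) (hU : U.Nontriv) :
    Tendsto (fun n => ((w n).sub U).gradSq) atTop (𝓝 0) :=
  H2.tendsto_gradSq_zero (hw.tendsto_massSq_sub_zero hsplit ha hq hm hμ hU)
    (hw.eventually_lapSq_sub_le hsplit ha hq hm hμ hU)

theorem tendsto_lapSq_sub (hw : IsMinimizingSeq σ m w)
    (hsplit : H2.AsymptoticSplitting σ w U) (ha : 4 < (N : ℝ) * σ)
    (hq : (N : ℝ) * σ < 4 * (σ + 1)) (hm : 0 < m) (hμ : m < mu0 N σ) (hU : U.Nontriv) :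
    Tendsto (fun n => ((w n).sub U).lapSq) atTop (𝓝 (tildeE N σ m - U.energy σ)) := by
  have hσ := pos_of_four_lt_mul ha
  have hgrad := hw.tendsto_gradSq_sub_zero hsplit ha hq.le hm hμ hU
  have hpot := H2.tendsto_pPow_zero (one_le_of_four_lt_mul ha) hσ hq
    (GNconst_pos_of_mu0_pos hσ (hm.trans hμ)) (hw.tendsto_massSq_sub_zero hsplit ha hq.le hm hμ hU)
    (hw.eventually_lapSq_sub_le hsplit ha hq.le hm hμ hU)
  have hlim := ((hw.tendsto_energy_sub hsplit).add (hgrad.const_mul 2)).add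
    (hpot.const_mul (1 / (σ + 1)))
  simp only [mul_zero, add_zero] at hlim
  refine hlim.congr fun n => ?_
  rw [H2.energy]
  ring

theorem energy_eq (hw : IsMinimizingSeq σ m w) (hsplit : H2.AsymptoticSplitting σ w U)
    (ha : 4 < (N : ℝ) * σ) (hq : (N : ℝ) * σ < 4 * (σ + 1)) (hm : 0 < m) (hμ : m < mu0 N σ)
    (hU : U.Nontriv) : U.energy σ = tildeE N σ m := by
  refine le_antisymm ?_ ?_
  · exact sub_nonneg.1 (ge_of_tendsto' (hw.tendsto_lapSq_sub hsplit ha hq hm hμ hU)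
      fun _ => H2.lapSq_nonneg _)
  · rw [← hw.massSq_eq hsplit ha hq.le hm hμ hU]
    exact tildeE_massSq_le_energy ha (hw.memO_of_asymptoticSplitting hsplit ha hq.le hm hμ hU)

theorem tendsto_lapSq_sub_zero (hw : IsMinimizingSeq σ m w)
    (hsplit : H2.AsymptoticSplitting σ w U) (ha : 4 < (N : ℝ) * σ)
    (hq : (N : ℝ) * σ < 4 * (σ + 1)) (hm : 0 < m) (hμ : m < mu0 N σ) (hU : U.Nontriv) :
    Tendsto (fun n => ((w n).sub U).lapSq) atTop (𝓝 0) := by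
  simpa only [hw.energy_eq hsplit ha hq hm hμ hU, sub_self] using
    hw.tendsto_lapSq_sub hsplit ha hq hm hμ hU

end IsMinimizingSeq

theorem h2TendstoTrans_of_tendsto_zero {u : ℕ → H2 N} {xs : ℕ → Esp N}
    (hmass : Tendsto (fun k => (((u k).translate (xs k)).sub U).massSq) atTop (𝓝 0))
    (hgrad : Tendsto (fun k => (((u k).translate (xs k)).sub U).gradSq) atTop (𝓝 0))
    (hlap : Tendsto (fun k => (((u k).translate (xs k)).sub U).lapSq) atTop (𝓝 0)) :
    H2TendstoTrans u xs U := by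
  have hcomponent (i) : Tendsto (fun k => ∫ x, ‖(((u k).translate (xs k)).sub U).grad i x‖ ^ 2)
      atTop (𝓝 0) :=
    squeeze_zero (fun _ => integral_sq_norm_nonneg _ _)
      (fun _ => H2.integral_sq_norm_grad_le_gradSq _ i) hgrad
  refine ⟨?_, fun i => ?_, ?_⟩
  · simpa [H2.sub, H2.translate, H2.aff] using
      tendsto_eLpNorm_two_zero (fun k => (((u k).translate (xs k)).sub U).u_mem) hmass
  · simpa [H2.sub, H2.translate, H2.aff] using
      tendsto_eLpNorm_two_zero (fun k => (((u k).translate (xs k)).sub U).grad_mem i)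
        (hcomponent i)
  · simpa [H2.sub, H2.translate, H2.aff] using
      tendsto_eLpNorm_two_zero (fun k => (((u k).translate (xs k)).sub U).lapl_mem) hlap

theorem IsMinimizingSeq.exists_h2TendstoTrans {u : ℕ → H2 N} (hu : IsMinimizingSeq σ m u)
    (ha : 4 < (N : ℝ) * σ) (hq : (N : ℝ) * σ < 4 * (σ + 1)) (hm : 0 < m) (hμ : m < mu0 N σ)
    (hlt : tildeE N σ m < -m) :
    ∃ (ψ : ℕ → ℕ) (xs : ℕ → Esp N) (U : H2 N), StrictMono ψ ∧ memO σ U ∧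
      H2TendstoTrans (fun k => u (ψ k)) xs U ∧ U.massSq = m ∧ U.energy σ = tildeE N σ m := by
  obtain ⟨ψ, xs, U, hψ, hU, hw, hsplit⟩ :=
    hu.exists_nontriv_asymptoticSplitting ha hq hm hμ hlt
  refine ⟨ψ, xs, U, hψ, hw.memO_of_asymptoticSplitting hsplit ha hq.le hm hμ hU, ?_,
    hw.massSq_eq hsplit ha hq.le hm hμ hU, hw.energy_eq hsplit ha hq hm hμ hU⟩
  exact h2TendstoTrans_of_tendsto_zero (hw.tendsto_massSq_sub_zero hsplit ha hq.le hm hμ hU)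
    (hw.tendsto_gradSq_sub_zero hsplit ha hq.le hm hμ hU)
    (hw.tendsto_lapSq_sub_zero hsplit ha hq hm hμ hU)

theorem mul_lt_four_mul_add_one (hσ : 0 < σ)
    (hsub : N ≤ 4 ∨ (5 ≤ N ∧ σ < 4 / ((N : ℝ) - 4))) : (N : ℝ) * σ < 4 * (σ + 1) := by
  rcases hsub with hN | ⟨hN, hσN⟩
  · have hle : (N : ℝ) * σ ≤ 4 * σ := by
      gcongr
      exact_mod_cast hN
    linarith
  · have hN' : (5 : ℝ) ≤ N := by exact_mod_cast hN
    rw [lt_div_iff₀ (by linarith)] at hσN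
    linarith

end Compactness

/-- If `0 < m < μ₀` and `Ẽ_min(m) < -m`, then `Ẽ_min(m)` is achieved,
and every minimizing sequence in `O` is precompact in `H²` modulo translations, the limit
being a minimizer in `O`. -/
theorem stmt19 (N : ℕ) (σ : ℝ) (hN : 1 ≤ N) (hσ4 : 4 / (N : ℝ) < σ)
    (hsub : N ≤ 4 ∨ (5 ≤ N ∧ σ < 4 / ((N : ℝ) - 4)))
    (m : ℝ) (hm0 : 0 < m) (hm : m < mu0 N σ) (hlt : tildeE N σ m < -m) :
    (∃ U : H2 N, memO σ U ∧ U.massSq = m ∧ U.energy σ = tildeE N σ m) ∧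
    (∀ u : ℕ → H2 N, (∀ n, memO σ (u n)) →
      Tendsto (fun n => (u n).massSq) atTop (nhds m) →
      Tendsto (fun n => (u n).energy σ) atTop (nhds (tildeE N σ m)) →
      ∃ (ψ : ℕ → ℕ) (xs : ℕ → Esp N) (U : H2 N), StrictMono ψ ∧ memO σ U ∧
        H2TendstoTrans (fun k => u (ψ k)) xs U ∧
        U.massSq = m ∧ U.energy σ = tildeE N σ m) := by
  have ha : 4 < (N : ℝ) * σ := (div_lt_iff₀' (by exact_mod_cast hN)).1 hσ4
  have hq := mul_lt_four_mul_add_one (pos_of_four_lt_mul ha) hsub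
  refine ⟨?_, fun u hmem hmass henergy =>
    IsMinimizingSeq.exists_h2TendstoTrans ⟨hmem, hmass, henergy⟩ ha hq hm0 hm hlt⟩
  obtain ⟨u, hu⟩ := exists_isMinimizingSeq ha (hlt.trans (neg_lt_zero.2 hm0))
  obtain ⟨-, -, U, -, hU, -, hmass, henergy⟩ := hu.exists_h2TendstoTrans ha hq hm0 hm hlt
  exact ⟨U, hU, hmass, henergy⟩

end
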